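/- arXiv:2106.12697 — 3 statements merged into one kernel-verified Lean document; each statement's English description precedes it below -/
import Mathlib

section
/- Let C be a commutative Noetherian ring with Krull dimension D < ∞, A = C[x_1,…,x_n], and r ≥ max(3, D+2). Then for every column b ∈ IUm_{2r+1}(A) there exists a column b′ ∈ EO(2r+1,A)^{≤ 12r−8} · b such that its entry b′_{−2} is lexicographically monic. -/
open Matrix

section OddDefs

variable {R : Type*} [CommRing R]

/-- Position of the middle basis vector `e_0` in the basis
`e_1,…,e_r,e_0,e_{-r},…,e_{-1}` of `R^{2r+1}`. -/
def midO (r : ℕ) : Fin (2 * r + 1) := ⟨r, by omega⟩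

/-- Position of `e_{-i}` given the position of `e_i` (odd case); fixes the middle position. -/
def negO (r : ℕ) (i : Fin (2 * r + 1)) : Fin (2 * r + 1) := ⟨2 * r - i.val, by omega⟩

/-- The split quadratic form `q(x) = x_0^2 + ∑_{i=1}^r x_i x_{-i}` on `R^{2r+1}`. -/
def quadO (r : ℕ) (x : Fin (2 * r + 1) → R) : R :=
  x (midO r) * x (midO r) + ∑ i : Fin r, x ⟨i.val, by omega⟩ * x ⟨2 * r - i.val, by omega⟩

/-- The odd split orthogonal group `O(2r+1,R)`, as a set of matrices. -/
def OO (r : ℕ) (R : Type*) [CommRing R] : Set (Matrix (Fin (2 * r + 1)) (Fin (2 * r + 1)) R) :=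
  {g | IsUnit g ∧ ∀ x : Fin (2 * r + 1) → R, quadO r (g.mulVec x) = quadO r x}

/-- Long root elementary transvection `T_{i,j}(ξ) = e + ξ e_{i,j} - ξ e_{-j,-i}` (odd case). -/
def TOlong (r : ℕ) (i j : Fin (2 * r + 1)) (ξ : R) :
    Matrix (Fin (2 * r + 1)) (Fin (2 * r + 1)) R :=
  1 + ξ • Matrix.single i j 1 - ξ • Matrix.single (negO r j) (negO r i) 1

/-- Short root elementary transvection
`T_{i,0}(ξ) = e + 2ξ e_{i,0} - ξ e_{0,-i} - ξ² e_{i,-i}`. -/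
def TOshort (r : ℕ) (i : Fin (2 * r + 1)) (ξ : R) :
    Matrix (Fin (2 * r + 1)) (Fin (2 * r + 1)) R :=
  1 + (2 * ξ) • Matrix.single i (midO r) 1
    - ξ • Matrix.single (midO r) (negO r i) 1
    - (ξ * ξ) • Matrix.single i (negO r i) 1

/-- Being an elementary orthogonal transvection (odd case). -/
def IsElemO (r : ℕ) (g : Matrix (Fin (2 * r + 1)) (Fin (2 * r + 1)) R) : Prop :=
  (∃ i j : Fin (2 * r + 1), ∃ ξ : R, i ≠ midO r ∧ j ≠ midO r ∧ i ≠ j ∧ i ≠ negO r j ∧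
      g = TOlong r i j ξ) ∨
  (∃ i : Fin (2 * r + 1), ∃ ξ : R, i ≠ midO r ∧ g = TOshort r i ξ)

/-- `EO(2r+1,R)^{≤N}` : products of at most `N` elementary orthogonal transvections. -/
def EOO (r N : ℕ) (R : Type*) [CommRing R] :
    Set (Matrix (Fin (2 * r + 1)) (Fin (2 * r + 1)) R) :=
  {g | ∃ L : List (Matrix (Fin (2 * r + 1)) (Fin (2 * r + 1)) R),
    L.length ≤ N ∧ (∀ m ∈ L, IsElemO r m) ∧ g = L.prod}

/-- `IUm_{2r+1}(R)` : columns `b` with `q(b) = 0` such that the row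
`(b_1,…,b_r,2b_0,b_{-r},…,b_{-1})` is unimodular. -/
def IUmO (r : ℕ) (R : Type*) [CommRing R] : Set (Fin (2 * r + 1) → R) :=
  {b | Ideal.span (Set.range fun i => if i = midO r then 2 * b i else b i) = ⊤ ∧ quadO r b = 0}

end OddDefs
/-- A multivariate polynomial is lexicographically monic if the coefficient at the
lexicographically largest occurring monomial equals `1` (variables with smaller index
are more significant). -/
def LexMonic {C : Type*} [CommRing C] {n : ℕ} (f : MvPolynomial (Fin n) C) : Prop :=
  ∃ d : Fin n →₀ ℕ, f.coeff d = 1 ∧ ∀ e : Fin n →₀ ℕ, toLex d < toLex e → f.coeff e = 0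

/-!
Localizing `C[x_1, …, x_n]` at the multiplicative set `W` of lexicographically monic polynomials
does not raise the dimension above `dim C`: if a prime `Q` of `R[X]` contains no polynomial whose
leading coefficient lies in a given multiplicative set, then a prime containing the leading
coefficients of `Q` and avoiding that set has at least the height of `Q`, and one inducts on `n`.
Hence primes disjoint from `W` have height at most `r - 2`, and by general position `r - 1`
transvections `T_{i,m}`, with `i` running over an isotropic set `S`, absorb the coordinate `m` of a
vector that is unimodular over the localization into the coordinates indexed by `S`.

Conversely, if an `f ∈ W` is a combination of the coordinates indexed by `S`, then `r - 1`
transvections add `h * f` to another entry, and every polynomial becomes lexicographically monic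
after adding a suitable multiple of `f`. As transvections always move the coordinates at opposite
positions as well, the two operations are alternated: the first clears `-t` into `S`, the second
rebuilds the entry at `-t` from `S`, after which `S` is no longer needed; two more absorptions clear
`-t` and `t` into `-S`, and a last addition produces the entry at `t`. The middle coordinate never
enters, since on an isotropic vector its square is a combination of the other coordinates.
-/

section Heights

open Polynomial

variable {R : Type*} [CommRing R]

attribute [local instance] Polynomial.algebra Polynomial.isLocalization in
theorem height_le_height_comap_C_add_one [IsNoetherianRing R] (Q : Ideal R[X]) [Q.IsPrime] :
    Q.height ≤ (Q.comap C).height + 1 := by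
  -- Localizing at `p` reduces this to `dim R_p[X] = dim R_p + 1`.
  let p := Q.comap C
  let S := p.primeCompl.map (C : R →+* R[X])
  have hSQ : Disjoint (S : Set R[X]) Q :=
    Set.disjoint_left.mpr <| by rintro _ ⟨a, ha, rfl⟩ haQ; exact ha haQ
  have hQ' : (Q.map (algebraMap R[X] (Localization.AtPrime p)[X])).IsPrime :=
    IsLocalization.isPrime_of_isPrime_disjoint S _ Q inferInstance hSQ
  have hdim := Ideal.height_le_ringKrullDim_of_isPrime
    (I := Q.map (algebraMap R[X] (Localization.AtPrime p)[X]))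
  rw [IsLocalization.height_map_of_disjoint S Q hSQ, ringKrullDim_of_isNoetherianRing,
    IsLocalization.AtPrime.ringKrullDim_eq_height p] at hdim
  exact_mod_cast hdim

theorem height_map_C_of_isPrime [IsNoetherianRing R] (p : Ideal R) [p.IsPrime] :
    (p.map C).height = p.height := by
  have hp : (p.map (algebraMap R R[X])).IsPrime := Ideal.isPrime_map_C_of_isPrime
  have hover : (p.map (algebraMap R R[X])).LiesOver p := by
    refine ⟨Ideal.ext fun x ↦ ⟨Ideal.mem_map_of_mem C, fun hx ↦ ?_⟩⟩
    simpa only [algebraMap_eq, coeff_C_zero] using Ideal.mem_map_C_iff.mp hx 0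
  have hfibre :
      (p.map (algebraMap R R[X])).map (Ideal.Quotient.mk (p.map (algebraMap R R[X]))) = ⊥ :=
    Ideal.map_quotient_self _
  rw [← algebraMap_eq, Ideal.height_eq_height_add_of_liesOver_of_hasGoingDown p, hfibre,
    Ideal.height_bot, add_zero]

theorem le_map_C_of_leadingCoeff_le {p : Ideal R} {Q : Ideal R[X]} (hp : p.map C ≤ Q)
    (hQ : Q.leadingCoeff ≤ p) : Q ≤ p.map C := by
  intro f hf
  induction hn : f.support.card using Nat.strong_induction_on generalizing f with
  | _ n ih =>
    obtain rfl | hf0 := eq_or_ne f 0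
    · exact zero_mem _
    have hlead : C f.leadingCoeff * X ^ f.natDegree ∈ p.map C :=
      Ideal.mul_mem_right _ _ <| Ideal.mem_map_of_mem C <|
        hQ <| (Ideal.mem_leadingCoeff _ _).mpr ⟨f, hf, rfl⟩
    have herase : f.eraseLead ∈ Q := by
      rw [← self_sub_C_mul_X_pow]
      exact Q.sub_mem hf (hp hlead)
    rw [← eraseLead_add_C_mul_X_pow f]
    exact add_mem (ih _ (hn ▸ eraseLead_support_card_lt hf0) herase rfl) hlead

theorem exists_isPrime_disjoint_height_le [IsNoetherianRing R] (W : Submonoid R) (Q : Ideal R[X])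
    [Q.IsPrime] (hQ : ∀ f ∈ Q, f.leadingCoeff ∉ W) :
    ∃ q : Ideal R, q.IsPrime ∧ Disjoint (q : Set R) W ∧ Q.height ≤ q.height := by
  have hlead : Disjoint (Q.leadingCoeff : Set R) W := by
    rw [Set.disjoint_left]
    intro x hx
    obtain ⟨f, hf, rfl⟩ := (Ideal.mem_leadingCoeff Q x).mp hx
    exact hQ f hf
  obtain ⟨q, hq, hlead_le, hqW⟩ := Ideal.exists_le_prime_disjoint _ W hlead
  refine ⟨q, hq, hqW, ?_⟩
  have hcomap : Q.comap C ≤ q := fun x hx ↦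
    hlead_le <| (Ideal.mem_leadingCoeff Q _).mpr ⟨C x, hx, leadingCoeff_C x⟩
  obtain rfl | hlt := hcomap.eq_or_lt
  · calc
      Q.height ≤ ((Q.comap C).map C).height :=
        Ideal.height_mono (le_map_C_of_leadingCoeff_le Ideal.map_comap_le hlead_le)
      _ = (Q.comap C).height := height_map_C_of_isPrime _
  · calc
      Q.height ≤ (Q.comap C).height + 1 := height_le_height_comap_C_add_one Q
      _ ≤ q.height := Ideal.height_add_one_le_of_lt_of_isPrime hlt

end Heights

section LexMonic

open MvPolynomial

variable {C : Type*} [CommRing C] {n : ℕ}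

theorem lexMonic_iff_monic {f : MvPolynomial (Fin n) C} :
    LexMonic f ↔ (MonomialOrder.lex (σ := Fin n)).Monic f := by
  obtain _ | _ := subsingleton_or_nontrivial C
  · exact iff_of_true ⟨0, Subsingleton.elim _ _, fun _ _ ↦ Subsingleton.elim _ _⟩
      MonomialOrder.Monic.of_subsingleton
  constructor
  · rintro ⟨d, hd, hlt⟩
    have hdeg : MonomialOrder.lex.degree f = d := by
      apply MonomialOrder.lex.toSyn.injective
      apply le_antisymm
      · exact MonomialOrder.degree_le_iff.mpr fun e he ↦
          le_of_not_gt fun hde ↦ mem_support_iff.mp he (hlt e hde)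
      · exact MonomialOrder.le_degree (mem_support_iff.mpr (hd ▸ one_ne_zero))
    rw [MonomialOrder.Monic, MonomialOrder.leadingCoeff, hdeg, hd]
  · exact fun hf ↦ ⟨_, hf, fun e he ↦ MonomialOrder.coeff_eq_zero_of_lt (m := .lex) he⟩

/-- The multiplicative set of lexicographically monic polynomials, at which the coordinates of a
column are localized. -/
def lexMonicSubmonoid (C : Type*) [CommRing C] (n : ℕ) : Submonoid (MvPolynomial (Fin n) C) where
  carrier := {f | LexMonic f}
  one_mem' := lexMonic_iff_monic.mpr MonomialOrder.monic_one
  mul_mem' hf hg :=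
    lexMonic_iff_monic.mpr ((lexMonic_iff_monic.mp hf).mul (lexMonic_iff_monic.mp hg))

theorem LexMonic.eq_one {f : MvPolynomial (Fin 0) C} (hf : LexMonic f) : f = 1 := by
  obtain ⟨d, hd, -⟩ := hf
  rw [eq_C_of_isEmpty f, Subsingleton.elim 0 d, hd, C_1]

theorem LexMonic.exists_add_mul {f : MvPolynomial (Fin n) C} (hf : LexMonic f)
    (g : MvPolynomial (Fin n) C) : ∃ h, LexMonic (g + h * f) := by
  classical
  obtain _ | n := n
  · exact ⟨1 - g, by
      rw [hf.eq_one, mul_one, add_sub_cancel]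
      exact (lexMonicSubmonoid C 0).one_mem⟩
  obtain _ | _ := subsingleton_or_nontrivial C
  · exact ⟨0, lexMonic_iff_monic.mpr MonomialOrder.Monic.of_subsingleton⟩
  set h : MvPolynomial (Fin (n + 1)) C := monomial (Finsupp.single 0 (degreeOf 0 g + 1)) 1
  have hh : MonomialOrder.lex.Monic h := MonomialOrder.monic_monomial_one
  rw [lexMonic_iff_monic] at hf
  have hg : MonomialOrder.lex.degree g 0 ≤ degreeOf 0 g := by
    obtain rfl | hg0 := eq_or_ne g 0
    · simp
    · exact le_degreeOf_of_mem_support 0 (MonomialOrder.lex.degree_mem_support hg0)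
  have hdeg : MonomialOrder.lex.degree (h * f) =
      Finsupp.single 0 (degreeOf 0 g + 1) + MonomialOrder.lex.degree f := by
    rw [MonomialOrder.degree_mul_of_mul_leadingCoeff_ne_zero
      (by simp [hh.leadingCoeff_eq_one, hf.leadingCoeff_eq_one]),
      MonomialOrder.degree_monomial, if_neg one_ne_zero]
  refine ⟨h, ?_⟩
  rw [lexMonic_iff_monic, add_comm g]
  refine (hh.mul hf).add_of_lt ?_
  rw [hdeg, MonomialOrder.lex_lt_iff, Finsupp.Lex.lt_iff]
  refine ⟨0, fun j hj ↦ absurd hj (Fin.not_lt_zero j), ?_⟩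
  simp only [ofLex_toLex, Finsupp.add_apply, Finsupp.single_eq_same]
  omega

theorem toLex_cons_lt_toLex_cons {a b : ℕ} {d e : Fin n →₀ ℕ} :
    toLex (Finsupp.cons a d) < toLex (Finsupp.cons b e) ↔
      a < b ∨ a = b ∧ toLex d < toLex e := by
  simp only [Finsupp.Lex.lt_iff, Fin.exists_fin_succ, Fin.forall_fin_succ, ofLex_toLex,
    Finsupp.cons_zero, Finsupp.cons_succ, Fin.succ_lt_succ_iff, Fin.succ_pos, Fin.not_lt_zero,
    implies_true, forall_const, lt_self_iff_false, IsEmpty.forall_iff, true_and, and_assoc,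
    exists_and_left]

theorem lexMonic_of_leadingCoeff_finSuccEquiv {f : MvPolynomial (Fin (n + 1)) C}
    (hf : LexMonic (finSuccEquiv C n f).leadingCoeff) : LexMonic f := by
  obtain ⟨d, hd, hlt⟩ := hf
  refine ⟨Finsupp.cons (finSuccEquiv C n f).natDegree d, ?_, fun e he ↦ ?_⟩
  · rw [← finSuccEquiv_coeff_coeff]
    exact hd
  · rw [← Finsupp.cons_tail e, toLex_cons_lt_toLex_cons] at he
    rw [← Finsupp.cons_tail e, ← finSuccEquiv_coeff_coeff]
    obtain hdeg | ⟨hdeg, htail⟩ := he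
    · rw [Polynomial.coeff_eq_zero_of_natDegree_lt hdeg, coeff_zero]
    · rw [← hdeg]
      exact hlt _ htail

theorem height_le_ringKrullDim_of_disjoint_lexMonicSubmonoid [IsNoetherianRing C]
    (P : Ideal (MvPolynomial (Fin n) C)) [P.IsPrime]
    (hP : Disjoint (P : Set (MvPolynomial (Fin n) C)) (lexMonicSubmonoid C n)) :
    P.height ≤ ringKrullDim C := by
  induction n with
  | zero =>
    simpa using Ideal.height_le_ringKrullDim_of_isPrime (I := P)
  | succ n ih =>
    let e := (finSuccEquiv C n).toRingEquiv
    have hprime : (P.map e).IsPrime := Ideal.map_isPrime_of_equiv e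
    have hlead : ∀ F ∈ P.map e, F.leadingCoeff ∉ lexMonicSubmonoid C n := by
      intro F hF hmonic
      obtain ⟨f, hf, rfl⟩ := (Ideal.mem_map_of_equiv e F).mp hF
      exact Set.disjoint_left.mp hP hf (lexMonic_of_leadingCoeff_finSuccEquiv hmonic)
    obtain ⟨q, hq, hqW, hle⟩ := exists_isPrime_disjoint_height_le _ (P.map e) hlead
    rw [e.height_map] at hle
    exact (WithBot.coe_le_coe.mpr hle).trans (ih q hqW)

end LexMonic

section StableRange

variable {A : Type*} [CommRing A]

theorem exists_forall_add_mul_notMem (a c : A) (T : Finset (Ideal A)) (hT : ∀ P ∈ T, P.IsPrime)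
    (hc : ∀ P ∈ T, c ∉ P) : ∃ l, ∀ P ∈ T, a + l * c ∉ P := by
  classical
  -- It suffices to avoid the maximal members of `T`: make `l` lie in exactly those missing `a`.
  let M := T.filter (Maximal (· ∈ T))
  let I := (M.filter (a ∉ ·)).inf id
  have hI : ¬ (I : Set A) ⊆ ⋃ P ∈ (M.filter (a ∈ ·) : Set (Ideal A)), P := by
    rw [Ideal.subset_union_prime ⊥ ⊥ (by simp_all [M])]
    rintro ⟨P, hP, hIP⟩
    simp only [M, Finset.mem_filter] at hP
    obtain ⟨⟨hPT, -⟩, haP⟩ := hP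
    obtain ⟨Q, hQ, hQP⟩ := (hT P hPT).inf_le'.mp hIP
    simp only [M, Finset.mem_filter] at hQ
    obtain ⟨⟨-, hQmax⟩, haQ⟩ := hQ
    exact haQ (hQmax.eq_of_le hPT hQP ▸ haP)
  obtain ⟨l, hlI, hl⟩ := Set.not_subset.mp hI
  refine ⟨l, fun P hP hmem ↦ ?_⟩
  obtain ⟨Q, hPQ, hQ⟩ := T.exists_le_maximal hP
  have hQM : Q ∈ M := Finset.mem_filter.mpr ⟨hQ.prop, hQ⟩
  by_cases haQ : a ∈ Q
  · have hlQ : l ∉ Q := fun h ↦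
      hl (Set.mem_biUnion (Finset.mem_filter.mpr ⟨hQM, haQ⟩) h)
    have hlc : l * c ∈ Q := (Ideal.add_mem_iff_right Q haQ).mp (hPQ hmem)
    exact ((hT Q hQ.prop).mem_or_mem hlc).elim hlQ (hc Q hQ.prop)
  · have hlQ : l ∈ Q := Finset.inf_le (f := id) (Finset.mem_filter.mpr ⟨hQM, haQ⟩) hlI
    exact haQ ((Ideal.add_mem_iff_left Q (Q.mul_mem_right c hlQ)).mp (hPQ hmem))

theorem exists_forall_card_le_height [IsNoetherianRing A] {ι : Type*} (a : ι → A) (c : A)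
    (J : Finset ι) :
    ∃ l : ι → A, ∀ P : Ideal A, P.IsPrime → (∀ j ∈ J, a j + l j * c ∈ P) → c ∉ P →
      J.card ≤ P.height := by
  classical
  induction J using Finset.induction_on with
  | empty => exact ⟨0, fun P _ _ _ ↦ by simp⟩
  | insert i J hi ih =>
    obtain ⟨l, hl⟩ := ih
    let I : Ideal A := Ideal.span ((fun j ↦ a j + l j * c) '' J)
    have hfin : {P ∈ I.minimalPrimes | c ∉ P}.Finite :=
      (Ideal.finite_minimalPrimes_of_isNoetherianRing A I).subset fun _ h ↦ h.1
    obtain ⟨t, ht⟩ := exists_forall_add_mul_notMem (a i) c hfin.toFinset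
      (fun P hP ↦ ((hfin.mem_toFinset).mp hP).1.1.1) (fun P hP ↦ ((hfin.mem_toFinset).mp hP).2)
    refine ⟨Function.update l i t, fun P hP hmem hcP ↦ ?_⟩
    simp only [Finset.forall_mem_insert, Function.update_self] at hmem
    obtain ⟨hi_mem, hJ_mem⟩ := hmem
    have hIP : I ≤ P := by
      rw [Ideal.span_le]
      rintro _ ⟨j, hj, rfl⟩
      simpa only [Function.update_of_ne (ne_of_mem_of_not_mem hj hi), SetLike.mem_coe]
        using hJ_mem j hj
    obtain ⟨Q, hQ, hQP⟩ := Ideal.exists_minimalPrimes_le hIP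
    have hQprime : Q.IsPrime := hQ.1.1
    have hcQ : c ∉ Q := fun h ↦ hcP (hQP h)
    have hlt : Q < P :=
      hQP.lt_of_ne fun h ↦ ht Q (hfin.mem_toFinset.mpr ⟨hQ, hcQ⟩) (h ▸ hi_mem)
    calc
      ((insert i J).card : ℕ∞) = J.card + 1 := by
        rw [Finset.card_insert_of_notMem hi, Nat.cast_succ]
      _ ≤ Q.height + 1 := by
        gcongr
        exact hl Q hQprime (fun j hj ↦ hQ.1.2 (Ideal.subset_span ⟨j, hj, rfl⟩)) hcQ
      _ ≤ P.height := Ideal.height_add_one_le_of_lt_of_isPrime hlt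

end StableRange

section UnimodularOn

variable {A ι : Type*} [CommRing A] {W : Submonoid A}

/-- The coordinates of `v` indexed by `K` form a unimodular row after localization at `W`,
expressed without denominators: the ideal they generate meets `W`. -/
def UnimodularOn (W : Submonoid A) (K : Set ι) (v : ι → A) : Prop :=
  ∃ f ∈ W, f ∈ Ideal.span (v '' K)

theorem unimodularOn_iff_forall_prime {K : Set ι} {v : ι → A} :
    UnimodularOn W K v ↔
      ∀ P : Ideal A, P.IsPrime → Disjoint (P : Set A) W → ∃ k ∈ K, v k ∉ P := by
  constructor
  · rintro ⟨f, hfW, hf⟩ P - hPW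
    by_contra! hK
    have hle : Ideal.span (v '' K) ≤ P := Ideal.span_le.mpr (Set.image_subset_iff.mpr hK)
    exact Set.disjoint_left.mp hPW (hle hf) hfW
  · intro hK
    by_contra hW
    have hdisj : Disjoint (Ideal.span (v '' K) : Set A) W :=
      Set.disjoint_left.mpr fun f hf hfW ↦ hW ⟨f, hfW, hf⟩
    obtain ⟨P, hP, hle, hPW⟩ := Ideal.exists_le_prime_disjoint _ W hdisj
    obtain ⟨k, hk, hkP⟩ := hK P hP hPW
    exact hkP (hle (Ideal.subset_span ⟨k, hk, rfl⟩))

theorem UnimodularOn.mono {K L : Set ι} {v : ι → A} (hv : UnimodularOn W K v) (hKL : K ⊆ L) :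
    UnimodularOn W L v := by
  obtain ⟨f, hfW, hf⟩ := hv
  exact ⟨f, hfW, Ideal.span_mono (Set.image_mono hKL) hf⟩

theorem unimodularOn_of_mem_IUmO {r : ℕ} {b : Fin (2 * r + 1) → A} (hb : b ∈ IUmO r A) :
    UnimodularOn W {k | k ≠ midO r} b := by
  obtain ⟨hunimod, hquad⟩ := hb
  rw [unimodularOn_iff_forall_prime]
  rintro P hP -
  by_contra! hmem
  have hsum : ∑ i : Fin r, b ⟨i.val, by omega⟩ * b ⟨2 * r - i.val, by omega⟩ ∈ P :=
    P.sum_mem fun i _ ↦ P.mul_mem_right _ (hmem _ (by simp [midO, i.isLt.ne]))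
  have hmid : b (midO r) ∈ P := by
    have hquad_mem : quadO r b ∈ P := hquad ▸ P.zero_mem
    have hsq : b (midO r) * b (midO r) ∈ P := (Ideal.add_mem_iff_left P hsum).mp hquad_mem
    exact (hP.mem_or_mem hsq).elim id id
  refine hP.ne_top (top_le_iff.mp (hunimod ▸ Ideal.span_le.mpr ?_))
  rintro _ ⟨i, rfl⟩
  dsimp only
  split_ifs with hi
  · exact P.mul_mem_left 2 (hi ▸ hmid)
  · exact hmem i hi

end UnimodularOn

section Isotropic

variable {r : ℕ}

theorem negO_negO (i : Fin (2 * r + 1)) : negO r (negO r i) = i :=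
  Fin.ext (by simp only [negO]; omega)

theorem negO_injective : Function.Injective (negO r) :=
  Function.LeftInverse.injective negO_negO

theorem negO_eq_self_iff {i : Fin (2 * r + 1)} : negO r i = i ↔ i = midO r := by
  simp only [negO, midO, Fin.ext_iff]
  omega

/-- The basis vectors indexed by `I` span a totally isotropic submodule. -/
def IsIsotropic (r : ℕ) (I : Finset (Fin (2 * r + 1))) : Prop :=
  ∀ i ∈ I, ∀ j ∈ I, negO r i ≠ j

namespace IsIsotropic

variable {I J : Finset (Fin (2 * r + 1))} {i : Fin (2 * r + 1)}

theorem mono (hJ : IsIsotropic r J) (hIJ : I ⊆ J) : IsIsotropic r I :=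
  fun i hi j hj ↦ hJ i (hIJ hi) j (hIJ hj)

theorem ne_midO (hI : IsIsotropic r I) (hi : i ∈ I) : i ≠ midO r :=
  fun h ↦ hI i hi i hi (negO_eq_self_iff.mpr h)

theorem negO_notMem (hI : IsIsotropic r I) (hi : i ∈ I) : negO r i ∉ I :=
  fun h ↦ hI i hi _ h rfl

theorem negO_notMem_of_insert (hI : IsIsotropic r (insert i I)) : negO r i ∉ I :=
  fun h ↦ hI.negO_notMem (Finset.mem_insert_self i I) (Finset.mem_insert_of_mem h)

theorem notMem_of_insert_negO (hI : IsIsotropic r (insert (negO r i) I)) : i ∉ I :=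
  negO_negO i ▸ hI.negO_notMem_of_insert

theorem image_negO (hI : IsIsotropic r I) : IsIsotropic r (I.image (negO r)) := by
  simp only [IsIsotropic, Finset.forall_mem_image]
  exact fun i hi j hj h ↦ hI i hi j hj (negO_injective h)

theorem insert_negO_image_negO (hI : IsIsotropic r (insert i I)) :
    IsIsotropic r (insert (negO r i) (I.image (negO r))) := by
  simpa only [Finset.image_insert] using hI.image_negO

theorem insert_image_negO (hI : IsIsotropic r (insert (negO r i) I)) :
    IsIsotropic r (insert i (I.image (negO r))) := by
  simpa only [negO_negO] using hI.insert_negO_image_negO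

end IsIsotropic

theorem exists_isIsotropic_insert_insert {t : Fin (2 * r + 1)} (ht : t ≠ midO r) :
    ∃ S : Finset (Fin (2 * r + 1)), S.card = r - 1 ∧
      IsIsotropic r (insert t S) ∧ IsIsotropic r (insert (negO r t) S) ∧
      ∀ k ≠ midO r, k ∈ S ∨ k ∈ S.image (negO r) ∨ k = t ∨ k = negO r t := by
  obtain ⟨s, hs, hst⟩ : ∃ s < midO r, s = t ∨ s = negO r t := by
    simp only [ne_eq, Fin.ext_iff, midO] at ht
    obtain hlt | hlt := lt_or_gt_of_ne ht
    · exact ⟨t, hlt, .inl rfl⟩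
    · exact ⟨negO r t, by simp only [Fin.lt_def, negO, midO]; omega, .inr rfl⟩
  have hs_isotropic : IsIsotropic r (insert s ((Finset.Iio (midO r)).erase s)) := by
    rw [Finset.insert_erase (Finset.mem_Iio.mpr hs)]
    simp only [IsIsotropic, Finset.mem_Iio, Fin.lt_def, ne_eq, Fin.ext_iff, negO, midO]
    omega
  have hneg_isotropic : IsIsotropic r (insert (negO r s) ((Finset.Iio (midO r)).erase s)) := by
    simp only [IsIsotropic, Finset.mem_insert, Finset.mem_erase, Finset.mem_Iio, Fin.lt_def, ne_eq,
      Fin.ext_iff, negO, midO] at hs ⊢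
    omega
  refine ⟨(Finset.Iio (midO r)).erase s, ?_, ?_, ?_, fun k hk ↦ ?_⟩
  · rw [Finset.card_erase_of_mem (Finset.mem_Iio.mpr hs), Fin.card_Iio]
    rfl
  · obtain rfl | rfl := hst
    · exact hs_isotropic
    · rwa [negO_negO] at hneg_isotropic
  · obtain rfl | rfl := hst
    · exact hneg_isotropic
    · exact hs_isotropic
  · have hkS : k ∈ (Finset.Iio (midO r)).erase s ∨ negO r k ∈ (Finset.Iio (midO r)).erase s ∨
        k = s ∨ k = negO r s := by
      simp only [Finset.mem_erase, Finset.mem_Iio, Fin.lt_def, ne_eq, Fin.ext_iff, negO, midO]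
        at hs hk ⊢
      omega
    obtain hkS | hkS | hkS := hkS
    · exact .inl hkS
    · exact .inr (.inl (Finset.mem_image.mpr ⟨_, hkS, negO_negO k⟩))
    · obtain rfl | rfl := hst
      · exact .inr (.inr hkS)
      · rw [negO_negO] at hkS
        exact .inr (.inr hkS.symm)

end Isotropic

section Transvections

variable {A : Type*} [CommRing A] {r : ℕ}

theorem EOO_subset_EOO {N M : ℕ} (h : N ≤ M) : EOO r N A ⊆ EOO r M A :=
  fun _ ⟨L, hL, hmem, hprod⟩ ↦ ⟨L, hL.trans h, hmem, hprod⟩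

theorem mul_mem_EOO {N M : ℕ} {E F : Matrix (Fin (2 * r + 1)) (Fin (2 * r + 1)) A}
    (hE : E ∈ EOO r N A) (hF : F ∈ EOO r M A) : E * F ∈ EOO r (N + M) A := by
  obtain ⟨L, hL, hLmem, rfl⟩ := hE
  obtain ⟨K, hK, hKmem, rfl⟩ := hF
  refine ⟨L ++ K, ?_, List.forall_mem_append.mpr ⟨hLmem, hKmem⟩, List.prod_append.symm⟩
  rw [List.length_append]
  exact add_le_add hL hK

theorem TOlong_mulVec_apply (i j k : Fin (2 * r + 1)) (ξ : A) (v : Fin (2 * r + 1) → A) :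
    (TOlong r i j ξ *ᵥ v) k = v k + (if k = i then ξ * v j else 0)
      - (if k = negO r j then ξ * v (negO r i) else 0) := by
  simp only [TOlong, Matrix.sub_mulVec, Matrix.add_mulVec, Matrix.one_mulVec, Matrix.smul_mulVec,
    Matrix.single_mulVec, Pi.sub_apply, Pi.add_apply, Pi.smul_apply, Function.update_apply,
    Pi.zero_apply, smul_eq_mul, one_mul, mul_ite, mul_zero]

theorem exists_EOO_mulVec_apply {m : Fin (2 * r + 1)} {S : Finset (Fin (2 * r + 1))}
    (hS : IsIsotropic r (insert m S)) (hm : m ∉ S) (ξ v : Fin (2 * r + 1) → A) :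
    ∃ E ∈ EOO r S.card A, ∀ k, (E *ᵥ v) k = v k + (if k ∈ S then ξ k * v m else 0)
      - (if k = negO r m then ∑ i ∈ S, ξ i * v (negO r i) else 0) := by
  induction S using Finset.induction_on with
  | empty => exact ⟨1, ⟨[], by simp⟩, by simp⟩
  | insert i S hi ih =>
    obtain ⟨him, hmS⟩ := not_or.mp (Finset.mem_insert.not.mp hm)
    obtain ⟨E, hE, hEv⟩ := ih (hS.mono (by grind)) hmS
    have hi_mem : i ∈ insert m (insert i S) := by simp
    have hm_mem : m ∈ insert m (insert i S) := by simp
    have hi_neg : negO r i ∉ S := fun h ↦ hS.negO_notMem hi_mem (by simp [h])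
    have hi_neg_m : negO r i ≠ negO r m := fun h ↦ him (negO_injective h).symm
    have hm_neg : m ≠ negO r m := (hS m hm_mem m hm_mem).symm
    have hneg_notMem : negO r m ∉ insert i S := fun h ↦ hS.negO_notMem hm_mem (by grind)
    have hT : TOlong r i m (ξ i) ∈ EOO r 1 A :=
      ⟨[TOlong r i m (ξ i)], le_rfl, by
        rw [List.forall_mem_singleton]
        exact .inl ⟨i, m, ξ i, hS.ne_midO hi_mem, hS.ne_midO hm_mem, Ne.symm him,
          (hS m hm_mem i hi_mem).symm, rfl⟩, by simp⟩
    refine ⟨TOlong r i m (ξ i) * E, ?_, fun k ↦ ?_⟩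
    · rw [Finset.card_insert_of_notMem hi, add_comm S.card]
      exact mul_mem_EOO hT hE
    · have hEm : (E *ᵥ v) m = v m := by simp [hEv, hmS, hm_neg]
      have hEi : (E *ᵥ v) (negO r i) = v (negO r i) := by simp [hEv, hi_neg, hi_neg_m]
      rw [← Matrix.mulVec_mulVec, TOlong_mulVec_apply, hEm, hEi, hEv, Finset.sum_insert hi]
      obtain rfl | hki := eq_or_ne k i
      · simp [hi, (hS m hm_mem k hi_mem).symm]
      · obtain rfl | hkm := eq_or_ne k (negO r m)
        · obtain ⟨-, hnegS⟩ := not_or.mp (Finset.mem_insert.not.mp hneg_notMem)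
          simp only [Finset.mem_insert, hki, hnegS, or_self, if_false, if_true]
          ring
        · simp [hkm, hki]

end Transvections

section Reduction

variable {A : Type*} [CommRing A] {W : Submonoid A} {r : ℕ} {m : Fin (2 * r + 1)}
  {S : Finset (Fin (2 * r + 1))} {v : Fin (2 * r + 1) → A}

theorem exists_EOO_unimodularOn_union [IsNoetherianRing A] (hS : IsIsotropic r (insert m S))
    (hm : m ∉ S) {K : Set (Fin (2 * r + 1))}
    (hW : ∀ P : Ideal A, P.IsPrime → Disjoint (P : Set A) W → P.height < S.card)
    (hv : UnimodularOn W (insert m (↑S ∪ K)) v) :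
    ∃ E ∈ EOO r S.card A, UnimodularOn W (↑S ∪ K) (E *ᵥ v) := by
  -- The extra factor `v m` makes the transvections trivial modulo `v m`.
  obtain ⟨l, hl⟩ := exists_forall_card_le_height v (v m * v m) S
  obtain ⟨E, hE, hEv⟩ := exists_EOO_mulVec_apply hS hm (fun i ↦ l i * v m) v
  refine ⟨E, hE, unimodularOn_iff_forall_prime.mpr fun P hP hPW ↦ ?_⟩
  by_contra! hmem
  have hvm : v m ∈ P := by
    by_contra hvm
    refine (hW P hP hPW).not_ge (hl P hP (fun i hi ↦ ?_) fun h ↦ hvm ((hP.mem_or_mem h).elim id id))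
    have him : i ≠ negO r m := (hS m (by simp) i (by simp [hi])).symm
    simpa [hEv, hi, him, mul_assoc] using hmem i (.inl hi)
  have hcongr (k) : (E *ᵥ v) k - v k ∈ P := by
    rw [hEv, add_sub_assoc, add_sub_cancel_left]
    refine P.sub_mem ?_ ?_
    · split_ifs
      exacts [P.mul_mem_left _ hvm, P.zero_mem]
    · split_ifs
      exacts [P.sum_mem fun i _ ↦ P.mul_mem_right _ (P.mul_mem_left _ hvm), P.zero_mem]
  obtain ⟨k, rfl | hk, hkP⟩ := unimodularOn_iff_forall_prime.mp hv P hP hPW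
  · exact hkP hvm
  · exact hkP ((Submodule.sub_mem_iff_right P (hmem k hk)).mp (hcongr k))

theorem exists_EOO_add_mem (hW : ∀ f ∈ W, ∀ g, ∃ h, g + h * f ∈ W)
    (hS : IsIsotropic r (insert m S)) (hm : m ∉ S) {K : Set (Fin (2 * r + 1))} (hmK : m ∉ K)
    (hSK : Disjoint (↑(S.image (negO r))) K ∨ negO r m ∈ K) (hv : UnimodularOn W (↑S ∪ K) v) :
    ∃ E ∈ EOO r S.card A, ∃ w ∈ Ideal.span ((E *ᵥ v) '' K), (E *ᵥ v) m + w ∈ W := by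
  obtain ⟨f, hfW, hf⟩ := hv
  rw [Set.image_union, Ideal.span_union, Submodule.mem_sup] at hf
  obtain ⟨g, hg, w, hw, rfl⟩ := hf
  obtain ⟨c, rfl⟩ := (Submodule.mem_span_image_finset_iff_exists_fun' A).mp hg
  obtain ⟨h, hh⟩ := hW _ hfW (v m)
  have hneg_notMem : negO r m ∉ S.image (negO r) := negO_injective.mem_finset_image.not.mpr hm
  have hm_notMem : m ∉ S.image (negO r) := hS.insert_negO_image_negO.notMem_of_insert_negO
  have hne : negO r m ≠ m := hS m (by simp) m (by simp)
  obtain ⟨E, hE, hEv⟩ := exists_EOO_mulVec_apply hS.insert_negO_image_negO hneg_notMem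
    (fun j ↦ -(h * c (negO r j))) v
  rw [Finset.card_image_of_injective S negO_injective] at hE
  simp only [negO_negO] at hEv
  -- The transvections also move the coordinates in `-S`, but by multiples of the coordinate `-m`.
  have hspan : Ideal.span (v '' K) ≤ Ideal.span ((E *ᵥ v) '' K) := by
    have hEK {k} (hk : k ∈ K) : (E *ᵥ v) k ∈ Ideal.span ((E *ᵥ v) '' K) :=
      Ideal.subset_span ⟨k, hk, rfl⟩
    rw [Ideal.span_le]
    rintro _ ⟨k, hk, rfl⟩
    have hEk := hEv k
    rw [if_neg (ne_of_mem_of_not_mem hk hmK), sub_zero, ← sub_eq_iff_eq_add] at hEk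
    rw [SetLike.mem_coe, ← hEk]
    refine Ideal.sub_mem _ (hEK hk) ?_
    split_ifs with hkS
    · have hneg_mem : negO r m ∈ K :=
        hSK.resolve_left fun hd ↦ Set.disjoint_left.mp hd hkS hk
      have hEneg : (E *ᵥ v) (negO r m) = v (negO r m) := by
        rw [hEv, if_neg hneg_notMem, if_neg hne, add_zero, sub_zero]
      exact Ideal.mul_mem_left _ _ (hEneg ▸ hEK hneg_mem)
    · exact zero_mem _
  refine ⟨E, hE, h * w, Ideal.mul_mem_left _ _ (hspan hw), ?_⟩
  have hEm : (E *ᵥ v) m + h * w = v m + h * (∑ i ∈ S, c i • v i + w) := by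
    rw [hEv, if_neg hm_notMem, if_pos rfl, Finset.sum_image negO_injective.injOn]
    simp only [negO_negO, neg_mul, Finset.sum_neg_distrib, smul_eq_mul, mul_add, Finset.mul_sum,
      mul_assoc]
    ring
  rwa [hEm]

theorem exists_EOO_unimodularOn_insert_insert [IsNoetherianRing A]
    (hW : ∀ f ∈ W, ∀ g, ∃ h, g + h * f ∈ W)
    (hheight : ∀ P : Ideal A, P.IsPrime → Disjoint (P : Set A) W → P.height < S.card)
    (hmS : IsIsotropic r (insert m S)) (hnegS : IsIsotropic r (insert (negO r m) S))
    (hv : UnimodularOn W (insert (negO r m) (↑S ∪ insert m ↑(S.image (negO r)))) v) :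
    ∃ E ∈ EOO r (2 * S.card) A,
      UnimodularOn W (insert (negO r m) (insert m ↑(S.image (negO r)))) (E *ᵥ v) := by
  have hne : negO r m ≠ m := hmS m (by simp) m (by simp)
  have hneg_notMem : negO r m ∉ S.image (negO r) := hnegS.insert_image_negO.negO_notMem_of_insert
  obtain ⟨E₁, hE₁, hv₁⟩ :=
    exists_EOO_unimodularOn_union hnegS hmS.negO_notMem_of_insert hheight hv
  obtain ⟨E₂, hE₂, w, hw, hmem⟩ := exists_EOO_add_mem hW hnegS hmS.negO_notMem_of_insert
    (not_or.mpr ⟨hne, hneg_notMem⟩) (.inr (by simp [negO_negO])) hv₁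
  refine ⟨E₂ * E₁, EOO_subset_EOO (by omega) (mul_mem_EOO hE₂ hE₁), ?_⟩
  rw [← Matrix.mulVec_mulVec]
  exact ⟨_, hmem, Ideal.add_mem _ (Ideal.subset_span ⟨negO r m, by simp, rfl⟩)
    (Ideal.span_mono (Set.image_mono (Set.subset_insert _ _)) hw)⟩

theorem exists_EOO_mulVec_mem_of_unimodularOn [IsNoetherianRing A]
    (hW : ∀ f ∈ W, ∀ g, ∃ h, g + h * f ∈ W)
    (hheight : ∀ P : Ideal A, P.IsPrime → Disjoint (P : Set A) W → P.height < S.card)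
    (hmS : IsIsotropic r (insert m S)) (hnegS : IsIsotropic r (insert (negO r m) S))
    (hv : UnimodularOn W (insert (negO r m) (insert m ↑S)) v) :
    ∃ E ∈ EOO r (3 * S.card) A, (E *ᵥ v) m ∈ W := by
  obtain ⟨E₁, hE₁, hv₁⟩ := exists_EOO_unimodularOn_union (K := {m}) hnegS
    hmS.negO_notMem_of_insert hheight (hv.mono (by grind))
  obtain ⟨E₂, hE₂, hv₂⟩ := exists_EOO_unimodularOn_union (K := ∅) hmS
    hnegS.notMem_of_insert_negO hheight (hv₁.mono (by grind))
  obtain ⟨E₃, hE₃, w, hw, hmem⟩ := exists_EOO_add_mem (K := ∅) hW hmS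
    hnegS.notMem_of_insert_negO (Set.notMem_empty _) (.inl (Set.disjoint_empty _)) hv₂
  rw [Set.image_empty, Ideal.span_empty, Submodule.mem_bot] at hw
  refine ⟨E₃ * (E₂ * E₁), EOO_subset_EOO (by omega) (mul_mem_EOO hE₃ (mul_mem_EOO hE₂ hE₁)), ?_⟩
  simpa only [← Matrix.mulVec_mulVec, hw, add_zero] using hmem

theorem exists_EOO_mulVec_mem [IsNoetherianRing A]
    (hW : ∀ f ∈ W, ∀ g, ∃ h, g + h * f ∈ W)
    (hheight : ∀ P : Ideal A, P.IsPrime → Disjoint (P : Set A) W → P.height + 2 ≤ r)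
    {t : Fin (2 * r + 1)} (ht : t ≠ midO r) (hv : v ∈ IUmO r A) :
    ∃ E ∈ EOO r (5 * (r - 1)) A, (E *ᵥ v) t ∈ W := by
  obtain ⟨S, hS, htS, hnegS, hcover⟩ := exists_isIsotropic_insert_insert ht
  have hlt (P : Ideal A) (hP : P.IsPrime) (hPW : Disjoint (P : Set A) W) :
      P.height < S.card := by
    have hle := hheight P hP hPW
    lift P.height to ℕ using ne_top_of_le_ne_top (ENat.natCast_ne_top r) (le_self_add.trans hle)
      with d
    norm_cast at hle ⊢
    omega
  have hcard : (S.image (negO r)).card = S.card := Finset.card_image_of_injective S negO_injective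
  have hcover' : {k | k ≠ midO r} ⊆
      insert (negO r t) (↑S ∪ insert t ↑(S.image (negO r))) := fun k hk ↦ by grind
  obtain ⟨E₁, hE₁, hv₁⟩ := exists_EOO_unimodularOn_insert_insert hW hlt htS hnegS
    ((unimodularOn_of_mem_IUmO hv).mono hcover')
  obtain ⟨E₂, hE₂, hmem⟩ := exists_EOO_mulVec_mem_of_unimodularOn hW
    (hcard.symm ▸ hlt) hnegS.insert_image_negO htS.insert_negO_image_negO hv₁
  rw [hcard] at hE₂
  refine ⟨E₂ * E₁, EOO_subset_EOO (by omega) (mul_mem_EOO hE₂ hE₁), ?_⟩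
  rwa [← Matrix.mulVec_mulVec]

end Reduction

theorem odd_make_lexMonic_general (C : Type*) [CommRing C] [IsNoetherianRing C] (n r : ℕ)
    (hr : ringKrullDim C + 2 ≤ r) {t : Fin (2 * r + 1)} (ht : t ≠ midO r)
    {b : Fin (2 * r + 1) → MvPolynomial (Fin n) C} (hb : b ∈ IUmO r (MvPolynomial (Fin n) C)) :
    ∃ E ∈ EOO r (5 * (r - 1)) (MvPolynomial (Fin n) C), LexMonic (E.mulVec b t) := by
  refine exists_EOO_mulVec_mem (W := lexMonicSubmonoid C n) (fun f hf ↦ hf.exists_add_mul)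
    (fun P hP hPW ↦ ?_) ht hb
  have hle : (P.height : WithBot ℕ∞) + 2 ≤ r :=
    (add_le_add_left (height_le_ringKrullDim_of_disjoint_lexMonicSubmonoid P hPW) 2).trans hr
  exact WithBot.coe_le_coe.mp hle

/-- Obtaining a lexicographically monic entry (odd case): any
`b ∈ IUm_{2r+1}(C[x_1,…,x_n])` can be transformed by at most `12r−8` elementary
orthogonal transvections into a column whose entry at position `−2` is
lexicographically monic. -/
theorem odd_make_lexMonic
    (C : Type*) [CommRing C] [IsNoetherianRing C] (n D : ℕ)
    (hdim : ringKrullDim C = (D : WithBot ℕ∞))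
    (r : ℕ) (hr : max 3 (D + 2) ≤ r)
    (b : Fin (2 * r + 1) → MvPolynomial (Fin n) C)
    (hb : b ∈ IUmO r (MvPolynomial (Fin n) C)) :
    ∃ E ∈ EOO r (12 * r - 8) (MvPolynomial (Fin n) C),
      LexMonic (E.mulVec b ⟨2 * r - 1, by omega⟩) := by
  obtain ⟨hr3, hrD⟩ := max_le_iff.mp hr
  obtain ⟨E, hE, hmonic⟩ := odd_make_lexMonic_general C n r (by rw [hdim]; exact_mod_cast hrD)
    (t := ⟨2 * r - 1, by omega⟩) (by simp only [ne_eq, midO, Fin.mk.injEq]; omega) hb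
  exact ⟨E, EOO_subset_EOO (by omega) hE, hmonic⟩
end

section
/- Let R be a commutative ring, r ≥ 2, and M ∈ Θ(r,R). Then the block matrix U(M) = [[1_r, 0],[M, 1_r]] lies in O(2r,R) and can be expressed as a product of r(r−1)/2 elementary orthogonal transvections; explicitly, if M = Σ_{1 ≤ j < i ≤ r} ξ_{i,j}(e_{r+1−i,j} − e_{r+1−j,i}), then U(M) = Π_{1 ≤ i < j ≤ r} T_{−i,j}(ξ_{i,j}). -/
open Matrix

section EvenDefs

variable {R : Type*} [CommRing R]

/-- In the basis `e_1,…,e_r,e_{-r},…,e_{-1}` of `R^{2r}` (0-indexed by `Fin (2*r)`),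
the position of `e_{-i}` given the position of `e_i` (and vice versa). -/
def negE (r : ℕ) (i : Fin (2 * r)) : Fin (2 * r) := ⟨2 * r - 1 - i.val, by omega⟩

/-- The split quadratic form `q(x) = ∑_{i=1}^r x_i x_{-i}` on `R^{2r}`. -/
def quadE (r : ℕ) (x : Fin (2 * r) → R) : R :=
  ∑ i : Fin r, x ⟨i.val, by omega⟩ * x ⟨2 * r - 1 - i.val, by omega⟩

/-- The even split orthogonal group `O(2r,R)`, as a set of matrices. -/
def OE (r : ℕ) (R : Type*) [CommRing R] : Set (Matrix (Fin (2 * r)) (Fin (2 * r)) R) :=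
  {g | IsUnit g ∧ ∀ x : Fin (2 * r) → R, quadE r (g.mulVec x) = quadE r x}

/-- The elementary orthogonal transvection `T_{i,j}(ξ) = e + ξ e_{i,j} - ξ e_{-j,-i}`. -/
def TE (r : ℕ) (i j : Fin (2 * r)) (ξ : R) : Matrix (Fin (2 * r)) (Fin (2 * r)) R :=
  1 + ξ • Matrix.single i j 1 - ξ • Matrix.single (negE r j) (negE r i) 1

/-- Being an elementary orthogonal transvection (even case): `T_{i,j}(ξ)` with `i ≠ ±j`. -/
def IsElemE (r : ℕ) (g : Matrix (Fin (2 * r)) (Fin (2 * r)) R) : Prop :=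
  ∃ i j : Fin (2 * r), ∃ ξ : R, i ≠ j ∧ i ≠ negE r j ∧ g = TE r i j ξ

/-- `EO(2r,R)^{≤N}` : products of at most `N` elementary orthogonal transvections. -/
def EOE (r N : ℕ) (R : Type*) [CommRing R] : Set (Matrix (Fin (2 * r)) (Fin (2 * r)) R) :=
  {g | ∃ L : List (Matrix (Fin (2 * r)) (Fin (2 * r)) R),
    L.length ≤ N ∧ (∀ m ∈ L, IsElemE r m) ∧ g = L.prod}

/-- `IUm_{2r}(R)` : isotropic unimodular columns. -/
def IUmE (r : ℕ) (R : Type*) [CommRing R] : Set (Fin (2 * r) → R) :=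
  {b | Ideal.span (Set.range b) = ⊤ ∧ quadE r b = 0}

end EvenDefs
/-- `Θ(r,R)`: `r × r` matrices that are antisymmetric with respect to the antidiagonal
and have zeroes on the antidiagonal. -/
def Theta (r : ℕ) (R : Type*) [CommRing R] : Set (Matrix (Fin r) (Fin r) R) :=
  {M | (∀ i j : Fin r, M ⟨r - 1 - j.val, by omega⟩ ⟨r - 1 - i.val, by omega⟩ = - M i j) ∧
    ∀ i : Fin r, M i ⟨r - 1 - i.val, by omega⟩ = 0}

/-- The block matrix `U(M) = [[1,0],[M,1]]`, `M ∈ Θ(r,R)`, written in the basis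
`e_1,…,e_r,e_{-r},…,e_{-1}`. -/
def Umat {R : Type*} [CommRing R] (r : ℕ) (M : Matrix (Fin r) (Fin r) R) :
    Matrix (Fin (2 * r)) (Fin (2 * r)) R :=
  fun i j =>
    if i.val < r then (if i = j then (1 : R) else 0)
    else if hj : j.val < r then M ⟨i.val - r, by omega⟩ ⟨j.val, hj⟩
    else (if i = j then 1 else 0)

/-!
List the basis vectors as `e_1, …, e_r` followed by `e_{-1}, …, e_{-r}`, i.e. reverse the second
half of the basis. Then `q(x, y) = x ⬝ᵥ y`, and `U(M)` becomes `[[1, 0], [A, 1]]`, where `A` is `M`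
with its rows reversed. The condition `M ∈ Θ(r, R)` says exactly that `A` is alternating, so
`q(x, A x + y) = x ⬝ᵥ A x + x ⬝ᵥ y = q(x, y)`. Moreover `A = ∑_{i < j} A_{i,j} (e_{i,j} - e_{j,i})`,
the map `A ↦ [[1, 0], [A, 1]]` turns sums into products, and it sends
`ξ (e_{i,j} - e_{j,i})` to `T_{-i,j}(ξ)`.
-/

section Alternating

open LinearMap (BilinForm)

variable {ι R : Type*} [Fintype ι] [CommRing R]

theorem dotProduct_mulVec_self_of_transpose_eq_neg {A : Matrix ι ι R} (hA : Aᵀ = -A)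
    (hdiag : A.diag = 0) (x : ι → R) : x ⬝ᵥ A *ᵥ x = 0 := by
  have hterm (i j : ι) : x i * (A i j * x j) + x j * (A j i * x i) = 0 := by
    rw [show A j i = -A i j from congrFun₂ hA i j]
    ring
  simp only [dotProduct, mulVec, Finset.mul_sum]
  rw [← Fintype.sum_prod_type']
  refine Finset.sum_involution (fun p _ ↦ p.swap) (fun p _ ↦ hterm p.1 p.2) ?_ (by simp) (by simp)
  rintro ⟨i, j⟩ - hne hswap
  obtain rfl : j = i := congrArg Prod.fst hswap
  exact hne (by simp [show A j j = 0 from congrFun hdiag j])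

theorem isAlt_toBilin'_iff [DecidableEq ι] {A : Matrix ι ι R} :
    (toBilin' A).IsAlt ↔ Aᵀ = -A ∧ A.diag = 0 := by
  refine ⟨fun h ↦ ⟨?_, ?_⟩, fun ⟨hA, hdiag⟩ x ↦ ?_⟩
  · ext i j
    simpa using (BilinForm.IsAlt.neg_eq h (Pi.single i 1) (Pi.single j 1)).symm
  · ext i
    simpa using h (Pi.single i 1)
  · rw [toBilin'_apply']
    exact dotProduct_mulVec_self_of_transpose_eq_neg hA hdiag x

theorem eq_sum_smul_single_sub_single_of_isAlt [LinearOrder ι] {A : Matrix ι ι R}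
    (hA : (toBilin' A).IsAlt) :
    A = ∑ p : ι × ι with p.1 < p.2,
      A p.1 p.2 • (single p.1 p.2 1 - single p.2 p.1 1) := by
  obtain ⟨htranspose, hdiag⟩ := isAlt_toBilin'_iff.1 hA
  ext a b
  have hupper (p : ι × ι) : p.1 = a ∧ p.2 = b ↔ p = (a, b) := by rw [Prod.ext_iff]
  have hlower (p : ι × ι) : p.2 = a ∧ p.1 = b ↔ p = (b, a) := by rw [Prod.ext_iff, and_comm]
  calc
    A a b = (if a < b then A a b else 0) - if b < a then A b a else 0 := by
      rcases lt_trichotomy a b with hab | rfl | hba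
      · simp [hab, hab.not_gt]
      · simpa using congrFun hdiag a
      · simpa [hba, hba.not_gt] using congrFun₂ htranspose b a
    _ = _ := by
      simp [Matrix.sum_apply, single_apply, mul_sub, Finset.sum_sub_distrib, hupper, hlower]

end Alternating

theorem reindexAlgEquiv_mulVec_comp {m n R : Type*} [Fintype m] [Fintype n] [DecidableEq m]
    [DecidableEq n] [CommSemiring R] (e : m ≃ n) (A : Matrix m m R) (x : n → R) :
    (reindexAlgEquiv R R e A *ᵥ x) ∘ e = A *ᵥ (x ∘ e) := by
  simp [submatrix_mulVec_equiv, Function.comp_assoc]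

section LowerUnipotent

variable {m n R : Type*} [Fintype m] [Fintype n] [DecidableEq m] [DecidableEq n]

/-- The embedding `A ↦ [[1, 0], [A, 1]]` of matrices into square block matrices. Its source is
tagged `Multiplicative` because it turns sums into products. -/
def lowerUnipotent [Semiring R] :
    Multiplicative (Matrix m n R) →* Matrix (n ⊕ m) (n ⊕ m) R where
  toFun A := fromBlocks 1 0 A.toAdd 1
  map_one' := fromBlocks_one
  map_mul' A B := by simp [fromBlocks_multiply]

theorem dotProduct_lowerUnipotent_mulVec [CommRing R] {A : Matrix n n R}
    (hA : (toBilin' A).IsAlt) (x : n ⊕ n → R) :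
    let y := lowerUnipotent (.ofAdd A) *ᵥ x
    (y ∘ Sum.inl) ⬝ᵥ (y ∘ Sum.inr) = (x ∘ Sum.inl) ⬝ᵥ (x ∘ Sum.inr) := by
  have hx : (x ∘ Sum.inl) ⬝ᵥ A *ᵥ (x ∘ Sum.inl) = 0 := by
    simpa only [toBilin'_apply'] using hA (x ∘ Sum.inl)
  simp [lowerUnipotent, fromBlocks_mulVec, dotProduct_add, hx]

theorem lowerUnipotent_smul_single_sub_single [Ring R] (i j : n) (ξ : R) :
    lowerUnipotent (.ofAdd (ξ • (single i j (1 : R) - single j i 1))) =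
      1 + ξ • single (.inr i) (.inl j) 1 - ξ • single (.inr j) (.inl i) 1 := by
  ext (a | a) (b | b) <;> simp [lowerUnipotent, single_apply, one_apply, mul_sub]

end LowerUnipotent

section SignedBasis

variable {R : Type*} [CommRing R] {r : ℕ}

/-- The positions of the basis vectors of `R^{2r}` indexed by sign: `inl i` is the position of
`e_i` and `inr i` that of `e_{-i}`, so that negating an index is `Sum.swap`. -/
def signedIndex (r : ℕ) : Fin r ⊕ Fin r ≃ Fin (2 * r) :=
  ((Equiv.refl _).sumCongr Fin.revPerm).trans
    (finSumFinEquiv.trans (finCongr (two_mul r).symm))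

@[simp]
theorem val_signedIndex_inl (i : Fin r) : (signedIndex r (.inl i) : ℕ) = i := rfl

@[simp]
theorem val_signedIndex_inr (i : Fin r) : (signedIndex r (.inr i) : ℕ) = r + i.rev := rfl

theorem negE_signedIndex (s : Fin r ⊕ Fin r) :
    negE r (signedIndex r s) = signedIndex r s.swap := by
  ext
  rcases s with i | i <;>
    simp only [negE, Sum.swap_inl, Sum.swap_inr, val_signedIndex_inl, val_signedIndex_inr,
      Fin.val_rev] <;>
    omega

theorem quadE_eq_dotProduct (x : Fin (2 * r) → R) :
    quadE r x = ((x ∘ signedIndex r) ∘ Sum.inl) ⬝ᵥ ((x ∘ signedIndex r) ∘ Sum.inr) := by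
  refine Finset.sum_congr rfl fun i _ ↦ ?_
  exact congrArg (x (signedIndex r (.inl i)) * x ·) (negE_signedIndex (.inl i))

theorem TE_signedIndex (s t : Fin r ⊕ Fin r) (ξ : R) :
    TE r (signedIndex r s) (signedIndex r t) ξ =
      reindexAlgEquiv R R (signedIndex r) (1 + ξ • single s t 1 - ξ • single t.swap s.swap 1) := by
  simp [TE, negE_signedIndex, submatrix_sub, submatrix_add]

theorem isElemE_TE_signedIndex {s t : Fin r ⊕ Fin r} (hst : s ≠ t) (hswap : s ≠ t.swap) (ξ : R) :
    IsElemE r (TE r (signedIndex r s) (signedIndex r t) ξ) :=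
  ⟨_, _, ξ, (signedIndex r).injective.ne hst,
    negE_signedIndex t ▸ (signedIndex r).injective.ne hswap, rfl⟩

theorem Umat_eq_reindex_lowerUnipotent (M : Matrix (Fin r) (Fin r) R) :
    Umat r M =
      reindexAlgEquiv R R (signedIndex r) (lowerUnipotent (.ofAdd (M.submatrix Fin.rev id))) := by
  rw [← (reindexAlgEquiv R R (signedIndex r)).symm_apply_eq]
  ext (a | a) (b | b)
  · simp [Umat, lowerUnipotent, one_apply]
  · have hne : signedIndex r (.inl a) ≠ signedIndex r (.inr b) :=
      (signedIndex r).injective.ne Sum.inl_ne_inr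
    simp [Umat, lowerUnipotent, hne]
  · simp [Umat, lowerUnipotent, -Fin.val_rev]
  · simp [Umat, lowerUnipotent, one_apply]

theorem isAlt_submatrix_rev_of_mem_Theta {M : Matrix (Fin r) (Fin r) R} (hM : M ∈ Theta r R) :
    (toBilin' (M.submatrix Fin.rev id)).IsAlt := by
  have hrev (i : Fin r) : (⟨r - 1 - i, by omega⟩ : Fin r) = i.rev :=
    Fin.ext (by simp only [Fin.val_rev]; omega)
  obtain ⟨hanti, hdiag⟩ := hM
  simp only [hrev] at hanti hdiag
  refine isAlt_toBilin'_iff.2 ⟨?_, ?_⟩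
  · ext i j
    simpa using hanti i.rev j
  · ext i
    simpa using hdiag i.rev

theorem Umat_mem_OE {M : Matrix (Fin r) (Fin r) R} (hM : M ∈ Theta r R) : Umat r M ∈ OE r R := by
  rw [Umat_eq_reindex_lowerUnipotent]
  set A := M.submatrix Fin.rev id
  have hunit : IsUnit (lowerUnipotent (.ofAdd A)) := (Group.isUnit _).map lowerUnipotent
  refine ⟨hunit.map _, fun x ↦ ?_⟩
  rw [quadE_eq_dotProduct, quadE_eq_dotProduct, reindexAlgEquiv_mulVec_comp]
  exact dotProduct_lowerUnipotent_mulVec (isAlt_submatrix_rev_of_mem_Theta hM) _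

-- The order in which `toList` enumerates the pairs is unspecified, but the factors commute.
theorem Umat_eq_prod_TE {M : Matrix (Fin r) (Fin r) R} (hM : M ∈ Theta r R) :
    Umat r M = (({p | p.1 < p.2} : Finset (Fin r × Fin r)).toList.map fun p ↦
      TE r (signedIndex r (.inr p.1)) (signedIndex r (.inl p.2)) (M p.1.rev p.2)).prod := by
  rw [Umat_eq_reindex_lowerUnipotent,
    eq_sum_smul_single_sub_single_of_isAlt (isAlt_submatrix_rev_of_mem_Theta hM),
    ← Finset.sum_map_toList, ofAdd_list_prod, map_list_prod, map_list_prod]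
  simp only [List.map_map, Function.comp_def, lowerUnipotent_smul_single_sub_single,
    TE_signedIndex, Sum.swap_inl, Sum.swap_inr, submatrix_apply, id]

end SignedBasis

/-- For `M ∈ Θ(r,R)`, the matrix `U(M) = [[1,0],[M,1]]` lies in `O(2r,R)` and is a
product of `r(r−1)/2` elementary orthogonal transvections, each of the form
`T_{−i,j}(ξ)` with `1 ≤ i < j ≤ r`. -/
theorem Umat_mem_O_and_product_of_transvections
    (R : Type*) [CommRing R] (r : ℕ) (hr : 2 ≤ r)
    (M : Matrix (Fin r) (Fin r) R) (hM : M ∈ Theta r R) :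
    Umat r M ∈ OE r R ∧
    ∃ L : List (Matrix (Fin (2 * r)) (Fin (2 * r)) R),
      L.length = r * (r - 1) / 2 ∧
      (∀ g ∈ L, IsElemE r g ∧ ∃ (i j : Fin r) (ξ : R), i < j ∧
        g = TE r (negE r ⟨i.val, by omega⟩) ⟨j.val, by omega⟩ ξ) ∧
      Umat r M = L.prod := by
  refine ⟨Umat_mem_OE hM, _, ?_, ?_, Umat_eq_prod_TE hM⟩
  · rw [List.length_map, Finset.length_toList, Fintype.card_product_filter_lt, Fintype.card_fin,
      Nat.choose_two_right]
  · simp only [List.mem_map, Finset.mem_toList, Finset.mem_filter_univ]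
    rintro _ ⟨⟨i, j⟩, hij, rfl⟩
    have hne : Sum.inr (α := Fin r) i ≠ (Sum.inl j).swap := Sum.inr_injective.ne hij.ne
    refine ⟨isElemE_TE_signedIndex Sum.inr_ne_inl hne _, i, j, M i.rev j, hij, ?_⟩
    exact congrArg (TE r · _ _) (negE_signedIndex (.inl i)).symm
end

section
/- Let B be a commutative Noetherian ring, A = B[y], r ≥ 3, and let b = b(y) = (b_1,…,b_{−1})^t ∈ IUm_{2r}(A). Let s ∈ B ∩ ⟨b_1,…,b_{r−1}⟩. Then there exists m ∈ ℕ such that, in the ring A[z] = B[y,z], the column b(y + s^m z) obtained from b by the substitution y ↦ y + s^m z satisfies b(y + s^m z) ∈ EO(2r, A[z])^{≤ r(r−1)/2 + 8r−4} · b(y). -/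
open Matrix

/-! Write `v₊`, `v₋` for the halves `(v_1, …, v_r)`, `(v_{-1}, …, v_{-r})` of a column, so that
`q(v) = v₊ · v₋`. Let `u = b(y)` and `v = b(y + s² t² z)` over `A[z][t]`, where `t` is a fresh
variable; then `v = u + t² s² d` for some column `d`. If `x · n = 0`, then
`p ↦ p + t² (x · p) n` is essentially a commutator of products of elementary transvections with
parameters divisible by `t`; because `s` is a combination of the first `r - 1` entries of `u₊` and
of `v₊`, such moves carry `u₊` to `v₊` in `7 r - 3` steps. The corresponding orthogonal
transvections carry `u` to a column `w` with `w₊ = v₊` and `v₋ = w₋ + t ε`. As they preserve `q`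
and `q(u) = q(v)`, we get `t (ε · v₊) = 0`, and so `ε · v₊ = 0`, since `t` is regular.

Specialize `t ↦ s`, which turns `v` into `b(y + s⁴ z)`. Now `v₋ - w₋ = s ε`, and if `a · v₊ = s`
then `s ε = (ε aᵗ - a εᵗ) v₊`. This matrix is alternating, so the remaining correction is a product
of `r (r - 1) / 2` orthogonal transvections. -/

theorem smul_add_single_dotProduct_eq_zero {R ι : Type*} [CommRing R] [Fintype ι] [DecidableEq ι]
    {l : ι} {a e : ι → R} (hal : a l = 0) (hel : e l = 0) (c s : R) :
    (c • a + Pi.single l s) ⬝ᵥ (s • e - Pi.single l (c * (a ⬝ᵥ e))) = 0 := by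
  simp only [add_dotProduct, dotProduct_sub, smul_dotProduct, dotProduct_smul, single_dotProduct,
    dotProduct_single, Pi.add_apply, Pi.smul_apply, Pi.single_eq_same, hal, hel, smul_eq_mul]
  ring

section TransvectionPath

variable {R ι : Type*} [CommRing R] [DecidableEq ι]

/-- `TransvectionPath t n p q`: the column `q` is obtained from `p` by `n` elementary linear
transvections `q_i ↦ q_i + t ξ q_j`, `i ≠ j`, all of whose parameters are multiples of `t`. -/
inductive TransvectionPath (t : R) : ℕ → (ι → R) → (ι → R) → Prop
  | refl (p : ι → R) : TransvectionPath t 0 p p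
  | step {n : ℕ} {p q : ι → R} {i j : ι} (ξ : R) (hij : i ≠ j) (h : TransvectionPath t n p q) :
      TransvectionPath t (n + 1) p (q + Pi.single i (t * ξ * q j))

namespace TransvectionPath

variable {t : R}

theorem trans {m n : ℕ} {p q w : ι → R} (hpq : TransvectionPath t m p q)
    (hqw : TransvectionPath t n q w) : TransvectionPath t (m + n) p w := by
  induction hqw with
  | refl => exact hpq
  | step ξ hij _ ih => exact (ih hpq).step ξ hij

variable (t)

theorem add_single_sum {i : ι} {S : Finset ι} (hi : i ∉ S) (y p : ι → R) :
    TransvectionPath t S.card p (p + Pi.single i (t * ∑ j ∈ S, y j * p j)) := by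
  induction S using Finset.induction_on with
  | empty => simpa using refl p
  | insert a S ha ih =>
    obtain ⟨hia, hiS⟩ : i ≠ a ∧ i ∉ S := by simpa using hi
    rw [Finset.card_insert_of_notMem ha]
    convert (ih hiS).step (y a) hia using 1
    rw [Finset.sum_insert ha, add_assoc, ← Pi.single_add]
    simp only [Pi.add_apply, Pi.single_eq_of_ne hia.symm]
    ring_nf

theorem add_sum_single {j : ι} {S : Finset ι} (hj : j ∉ S) (x p : ι → R) :
    TransvectionPath t S.card p (p + ∑ i ∈ S, Pi.single i (t * x i * p j)) := by
  induction S using Finset.induction_on with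
  | empty => simpa using refl p
  | insert a S ha ih =>
    obtain ⟨hja, hjS⟩ : j ≠ a ∧ j ∉ S := by simpa using hj
    have hpj : (p + ∑ i ∈ S, Pi.single i (t * x i * p j) : ι → R) j = p j := by
      simp [Finset.sum_apply, Pi.single_apply, hjS]
    rw [Finset.card_insert_of_notMem ha]
    convert (ih hjS).step (x a) hja.symm using 1
    rw [hpj, Finset.sum_insert ha]
    abel

theorem add_smul_of_support_subset {j : ι} {S : Finset ι} (hj : j ∉ S) {x : ι → R}
    (hx : Function.support x ⊆ S) (p : ι → R) :
    TransvectionPath t S.card p (p + (t * p j) • x) := by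
  have hsum : (t * p j) • x = ∑ i ∈ S, Pi.single i (t * x i * p j) := by
    ext k
    by_cases hk : k ∈ S
    · simp [Finset.sum_apply, Pi.single_apply, hk, mul_right_comm]
    · have : x k = 0 := Function.notMem_support.1 fun h => hk (hx h)
      simp [Finset.sum_apply, Pi.single_apply, hk, this]
  exact hsum ▸ add_sum_single t hj x p

variable [Fintype ι]

theorem add_single_dotProduct {i : ι} {y : ι → R} (hy : y i = 0) (p : ι → R) :
    TransvectionPath t (Fintype.card ι - 1) p (p + Pi.single i (t * (y ⬝ᵥ p))) := by
  have hsum : y ⬝ᵥ p = ∑ j ∈ Finset.univ.erase i, y j * p j :=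
    (Finset.sum_erase _ (by simp [hy])).symm
  rw [hsum, ← Finset.card_univ, ← Finset.card_erase_of_mem (Finset.mem_univ i)]
  exact add_single_sum t (Finset.notMem_erase i _) y p

/- For `y h = 0` this is the commutator of `p ↦ p + t (y ⬝ᵥ p) e_h` and `p ↦ p + t p_h x`; the
contribution `t² y_h p_h x` of the remaining coordinate of `y` is merged into its last factor. -/
theorem add_dotProduct_smul {h : ι} {S : Finset ι} (hS : h ∉ S) {x y : ι → R}
    (hx : Function.support x ⊆ S) (hyx : y ⬝ᵥ x = 0) (p : ι → R) :
    TransvectionPath t (2 * S.card + 2 * (Fintype.card ι - 1)) p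
      (p + (t ^ 2 * (y ⬝ᵥ p)) • x) := by
  have hxh : x h = 0 := Function.notMem_support.1 fun hh => hS (hx hh)
  set y' := y - Pi.single h (y h) with hy'
  have hy'h : y' h = 0 := by simp [hy']
  have hy'x : y' ⬝ᵥ x = 0 := by simp [hy', sub_dotProduct, hyx, hxh]
  have hyp : y ⬝ᵥ p = y' ⬝ᵥ p + y h * p h := by simp [hy', sub_dotProduct]
  set p₁ := p + Pi.single h (t * (y' ⬝ᵥ p)) with hp₁
  set p₂ := p₁ + (t * p₁ h) • x with hp₂
  set p₃ := p + (t * p₁ h) • x with hp₃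
  have path₁ : TransvectionPath t _ p p₁ := add_single_dotProduct t hy'h p
  have path₂ : TransvectionPath t _ p₁ p₂ := add_smul_of_support_subset t hS hx p₁
  have path₃ : TransvectionPath t (Fintype.card ι - 1) p₂ p₃ := by
    convert add_single_dotProduct t (y := -y') (i := h) (by simp [hy'h]) p₂ using 1
    have : -y' ⬝ᵥ p₂ = -(y' ⬝ᵥ p) := by simp [hp₂, hp₁, dotProduct_add, hy'x, hy'h]
    rw [this, hp₃, hp₂, hp₁, mul_neg, Pi.single_neg]
    abel
  have path₄ : TransvectionPath t S.card p₃ (p + (t ^ 2 * (y ⬝ᵥ p)) • x) := by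
    convert add_smul_of_support_subset t hS (x := (t * y h - 1) • x)
      ((Function.support_const_smul_subset _ _).trans hx) p₃ using 1
    ext k
    simp only [hyp, hp₃, hp₁, hxh, Pi.add_apply, Pi.smul_apply, Pi.single_eq_same, smul_eq_mul,
      mul_zero, add_zero]
    ring
  convert ((path₁.trans path₂).trans path₃).trans path₄ using 1
  ring

theorem of_eq_off {l : ι} {a p q : ι → R} {ω : R} (ha : a l = 0) (hoff : ∀ i, i ≠ l → p i = q i)
    (hl : q l = p l + t * ω * (a ⬝ᵥ q)) : TransvectionPath t (Fintype.card ι - 1) p q := by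
  have hap : a ⬝ᵥ p = a ⬝ᵥ q := Finset.sum_congr rfl fun i _ => by
    obtain rfl | hi := eq_or_ne i l
    · simp [ha]
    · rw [hoff i hi]
  convert add_single_dotProduct t (y := ω • a) (i := l) (by simp [ha]) p using 1
  ext i
  obtain rfl | hi := eq_or_ne i l
  · simp [hl, hap, mul_assoc]
  · simp [hi, hoff i hi]

/- With `y = (1 - p_l) a + s e_l` one has `y ⬝ᵥ p = s`, and the bracketed vector is orthogonal to
`y`. It is split in two because a vector of a transvection has to vanish at some coordinate. -/
theorem add_smul_of_dotProduct_eq {l g h : ι} (hgl : g ≠ l) (hhl : h ≠ l) (hgh : g ≠ h) {s : R}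
    {a p e : ι → R} (hal : a l = 0) (hel : e l = 0) (hap : a ⬝ᵥ p = s) :
    TransvectionPath t (6 * (Fintype.card ι - 1) + 4) p
      (p + (t ^ 2 * s) • (s • e - Pi.single l ((1 - p l) * (a ⬝ᵥ e)))) := by
  set y := (1 - p l) • a + Pi.single l s with hy
  set x₁ := s • Pi.single g (e g) - Pi.single l ((1 - p l) * (a g * e g)) with hx₁
  set x₂ := s • e - Pi.single l ((1 - p l) * (a ⬝ᵥ e)) - x₁ with hx₂
  have hyp : y ⬝ᵥ p = s := by
    simp only [hy, add_dotProduct, smul_dotProduct, hap, single_dotProduct, smul_eq_mul]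
    ring
  have hyx₁ : y ⬝ᵥ x₁ = 0 := by
    have := smul_add_single_dotProduct_eq_zero hal (Pi.single_eq_of_ne hgl.symm (e g)) (1 - p l) s
    rwa [dotProduct_single] at this
  have hyx₂ : y ⬝ᵥ x₂ = 0 := by
    rw [hx₂, dotProduct_sub, hyx₁, smul_add_single_dotProduct_eq_zero hal hel, sub_zero]
  have hsupp₁ : Function.support x₁ ⊆ ({g, l} : Finset ι) := fun i hi => by
    contrapose! hi
    simp_all
  have hsupp₂ : Function.support x₂ ⊆ (Finset.univ.erase g : Finset ι) := fun i hi => by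
    have : i ≠ g := by
      rintro rfl
      simp [hx₂, hx₁, hgl] at hi
    simpa using this
  have path₁ := add_dotProduct_smul t (by simp [hgh.symm, hhl] : h ∉ {g, l}) hsupp₁ hyx₁ p
  have path₂ := add_dotProduct_smul t (Finset.notMem_erase g _) hsupp₂ hyx₂
    (p + (t ^ 2 * s) • x₁)
  rw [hyp] at path₁
  rw [dotProduct_add, dotProduct_smul, hyx₁, smul_zero, add_zero, hyp] at path₂
  convert path₁.trans path₂ using 1
  · rw [Finset.card_pair hgl, Finset.card_erase_of_mem (Finset.mem_univ _), Finset.card_univ]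
    ring
  · rw [add_assoc, ← smul_add, hx₂, add_sub_cancel]

theorem of_eq_add_smul {l g h : ι} (hgl : g ≠ l) (hhl : h ≠ l) (hgh : g ≠ h) {s : R}
    {a a' p q e : ι → R} (hal : a l = 0) (ha'l : a' l = 0) (hap : a ⬝ᵥ p = s) (ha'q : a' ⬝ᵥ q = s)
    (hpq : q = p + (t ^ 2 * s ^ 2) • e) :
    TransvectionPath t (7 * (Fintype.card ι - 1) + 4) p q := by
  set f : ι → R := e - Pi.single l (e l) with hf
  have hfl : f l = 0 := by simp [hf]
  set p' := p + (t ^ 2 * s) • (s • f - Pi.single l ((1 - p l) * (a ⬝ᵥ f))) with hp'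
  have path₁ : TransvectionPath t _ p p' := add_smul_of_dotProduct_eq t hgl hhl hgh hal hfl hap
  have hoff (i : ι) (hi : i ≠ l) : p' i = q i := by
    simp only [hp', hpq, hf, Pi.add_apply, Pi.smul_apply, Pi.sub_apply, Pi.single_eq_of_ne hi,
      sub_zero, smul_eq_mul]
    ring
  have hql : q l = p' l + t * (t * (s * e l + (1 - p l) * (a ⬝ᵥ f))) * (a' ⬝ᵥ q) := by
    have hp'l : p' l = p l - t ^ 2 * s * ((1 - p l) * (a ⬝ᵥ f)) := by
      simp [hp', hfl, sub_eq_add_neg]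
    rw [ha'q, hp'l, congrFun hpq l, Pi.add_apply, Pi.smul_apply, smul_eq_mul]
    ring
  convert path₁.trans (of_eq_off t ha'l hoff hql) using 1
  ring

end TransvectionPath

end TransvectionPath

section Transvections

variable {R : Type*} [CommRing R] {r : ℕ}

/-- The position of `e_i`, `1 ≤ i ≤ r`, in the basis of `R^{2r}`; that of `e_{-i}` is
`negE r (posE r i)`. -/
def posE (r : ℕ) (i : Fin r) : Fin (2 * r) := ⟨i.val, by omega⟩

/-- The coordinates `v_1, …, v_r` of a column `v` of `R^{2r}`. -/
def posCoords (v : Fin (2 * r) → R) : Fin r → R := fun i => v (posE r i)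

/-- The coordinates `v_{-1}, …, v_{-r}` of a column `v` of `R^{2r}`, in this order: the `i`-th one
pairs with the `i`-th one of `posCoords v`. -/
def negCoords (v : Fin (2 * r) → R) : Fin r → R := fun i => v (negE r (posE r i))

theorem posE_inj {i j : Fin r} : posE r i = posE r j ↔ i = j := by
  simp [posE, Fin.ext_iff]

@[simp]
theorem negE_negE (i : Fin (2 * r)) : negE r (negE r i) = i := by
  simp only [negE, Fin.ext_iff]
  omega

theorem negE_inj {i j : Fin (2 * r)} : negE r i = negE r j ↔ i = j :=
  (Function.LeftInverse.injective negE_negE).eq_iff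

theorem posE_ne_negE_posE (i j : Fin r) : posE r i ≠ negE r (posE r j) := by
  simp only [posE, negE, ne_eq, Fin.ext_iff]
  omega

theorem exists_eq_posE_or_negE_posE (k : Fin (2 * r)) :
    ∃ i, k = posE r i ∨ k = negE r (posE r i) := by
  by_cases hk : k.val < r
  · exact ⟨⟨k.val, hk⟩, Or.inl rfl⟩
  · refine ⟨⟨2 * r - 1 - k.val, by omega⟩, Or.inr ?_⟩
    simp only [posE, negE, Fin.ext_iff]
    omega

theorem ext_coords {R : Type*} {v w : Fin (2 * r) → R} (hpos : posCoords v = posCoords w)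
    (hneg : negCoords v = negCoords w) : v = w := by
  ext k
  obtain ⟨i, rfl | rfl⟩ := exists_eq_posE_or_negE_posE k
  exacts [congrFun hpos i, congrFun hneg i]

theorem quadE_eq_dotProduct_s18 (v : Fin (2 * r) → R) : quadE r v = posCoords v ⬝ᵥ negCoords v :=
  rfl

theorem quadE_map {S : Type*} [CommRing S] (φ : R →+* S) (v : Fin (2 * r) → R) :
    quadE r (φ ∘ v) = φ (quadE r v) := by
  simp [quadE]

theorem exists_dotProduct_posCoords_eq_of_mem_span {l : Fin r} {b : Fin (2 * r) → R} {x : R}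
    (hx : x ∈ Ideal.span {x : R | ∃ i : Fin (2 * r), i.val < l.val ∧ x = b i}) :
    ∃ a : Fin r → R, a l = 0 ∧ a ⬝ᵥ posCoords b = x := by
  have himage : {x : R | ∃ i : Fin (2 * r), i.val < l.val ∧ x = b i}
      = posCoords b '' (Finset.Iio l : Finset (Fin r)) := by
    ext x
    simp only [Finset.coe_Iio, Set.mem_image, Set.mem_Iio]
    constructor
    · rintro ⟨i, hi, rfl⟩
      exact ⟨⟨i, hi.trans l.isLt⟩, hi, rfl⟩
    · rintro ⟨i, hi, rfl⟩
      exact ⟨posE r i, hi, rfl⟩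
  rw [himage, Ideal.span, Submodule.mem_span_image_finset_iff_exists_fun'] at hx
  obtain ⟨a, rfl⟩ := hx
  refine ⟨fun i => if i < l then a i else 0, by simp, ?_⟩
  simp only [dotProduct, ite_mul, zero_mul, ← Finset.sum_filter, Finset.filter_gt_eq_Iio,
    smul_eq_mul]

@[simp]
theorem posCoords_add (v w : Fin (2 * r) → R) : posCoords (v + w) = posCoords v + posCoords w :=
  rfl

@[simp]
theorem negCoords_add (v w : Fin (2 * r) → R) : negCoords (v + w) = negCoords v + negCoords w :=
  rfl

@[simp]
theorem posCoords_sub (v w : Fin (2 * r) → R) : posCoords (v - w) = posCoords v - posCoords w :=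
  rfl

@[simp]
theorem negCoords_sub (v w : Fin (2 * r) → R) : negCoords (v - w) = negCoords v - negCoords w :=
  rfl

@[simp]
theorem posCoords_single_posE (i : Fin r) (c : R) :
    posCoords (Pi.single (posE r i) c) = Pi.single i c := by
  ext k
  simp [posCoords, Pi.single_apply, posE_inj]

@[simp]
theorem negCoords_single_posE (i : Fin r) (c : R) :
    negCoords (Pi.single (posE r i) c) = 0 := by
  ext k
  simp [negCoords, (posE_ne_negE_posE i k).symm]

@[simp]
theorem posCoords_single_negE (i : Fin r) (c : R) :
    posCoords (Pi.single (negE r (posE r i)) c) = 0 := by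
  ext k
  simp [posCoords, posE_ne_negE_posE k i]

@[simp]
theorem negCoords_single_negE (i : Fin r) (c : R) :
    negCoords (Pi.single (negE r (posE r i)) c) = Pi.single i c := by
  ext k
  simp [negCoords, Pi.single_apply, negE_inj, posE_inj]

theorem TE_mulVec (i j : Fin (2 * r)) (ξ : R) (v : Fin (2 * r) → R) :
    TE r i j ξ *ᵥ v = v + Pi.single i (ξ * v j) - Pi.single (negE r j) (ξ * v (negE r i)) := by
  ext k
  simp [TE, sub_mulVec, add_mulVec, single_mulVec, Function.update_apply, Pi.single_apply]

theorem TE_map {S : Type*} [CommRing S] (φ : R →+* S) (i j : Fin (2 * r)) (ξ : R) :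
    (TE r i j ξ).map φ = TE r i j (φ ξ) := by
  ext k l
  simp [TE, Matrix.one_apply, Matrix.single_apply, apply_ite φ]

theorem isElemE_posE_posE {i j : Fin r} (hij : i ≠ j) (ξ : R) :
    IsElemE r (TE r (posE r i) (posE r j) ξ) :=
  ⟨_, _, ξ, posE_inj.not.2 hij, posE_ne_negE_posE i j, rfl⟩

theorem isElemE_negE_posE {i j : Fin r} (hij : i ≠ j) (ξ : R) :
    IsElemE r (TE r (negE r (posE r i)) (posE r j) ξ) :=
  ⟨_, _, ξ, (posE_ne_negE_posE j i).symm, (negE_inj.trans posE_inj).not.2 hij, rfl⟩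

theorem quadE_add_single (v : Fin (2 * r) → R) (k : Fin (2 * r)) (c : R) :
    quadE r (v + Pi.single k c) = quadE r v + c * v (negE r k) := by
  obtain ⟨i, rfl | rfl⟩ := exists_eq_posE_or_negE_posE k
  · simp [quadE_eq_dotProduct_s18, add_dotProduct, negCoords]
  · simp [quadE_eq_dotProduct_s18, dotProduct_add, posCoords, mul_comm c]

theorem IsElemE.quadE_mulVec {g : Matrix (Fin (2 * r)) (Fin (2 * r)) R} (hg : IsElemE r g)
    (v : Fin (2 * r) → R) : quadE r (g *ᵥ v) = quadE r v := by
  obtain ⟨i, j, ξ, hij, -, rfl⟩ := hg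
  rw [TE_mulVec, sub_eq_add_neg, ← Pi.single_neg, quadE_add_single, quadE_add_single, negE_negE,
    Pi.add_apply, Pi.single_eq_of_ne hij.symm]
  ring

theorem one_mem_EOE : (1 : Matrix (Fin (2 * r)) (Fin (2 * r)) R) ∈ EOE r 0 R :=
  ⟨[], by simp⟩

theorem mul_mem_EOE {m n : ℕ} {E F : Matrix (Fin (2 * r)) (Fin (2 * r)) R} (hE : E ∈ EOE r m R)
    (hF : F ∈ EOE r n R) : E * F ∈ EOE r (m + n) R := by
  obtain ⟨L, hL, hLelem, rfl⟩ := hE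
  obtain ⟨M, hM, hMelem, rfl⟩ := hF
  refine ⟨L ++ M, ?_, fun g hg => ?_, (List.prod_append ..).symm⟩
  · rw [List.length_append]
    exact add_le_add hL hM
  · exact (List.mem_append.1 hg).elim (hLelem g) (hMelem g)

theorem IsElemE.mul_mem_EOE {n : ℕ} {g E : Matrix (Fin (2 * r)) (Fin (2 * r)) R} (hg : IsElemE r g)
    (hE : E ∈ EOE r n R) : g * E ∈ EOE r (n + 1) R := by
  rw [add_comm]
  exact _root_.mul_mem_EOE ⟨[g], by simpa using hg⟩ hE

theorem EOE_mono {m n : ℕ} (hmn : m ≤ n) : EOE r m R ⊆ EOE r n R :=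
  fun _ ⟨L, hL, hLelem, hprod⟩ => ⟨L, hL.trans hmn, hLelem, hprod⟩

theorem map_mem_EOE {S : Type*} [CommRing S] (φ : R →+* S) {n : ℕ}
    {E : Matrix (Fin (2 * r)) (Fin (2 * r)) R} (hE : E ∈ EOE r n R) : E.map φ ∈ EOE r n S := by
  obtain ⟨L, hL, hLelem, rfl⟩ := hE
  refine ⟨L.map φ.mapMatrix, by simpa using hL, ?_, map_list_prod φ.mapMatrix L⟩
  simp only [List.forall_mem_map]
  intro g hg
  obtain ⟨i, j, ξ, hij, hij', rfl⟩ := hLelem g hg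
  exact ⟨i, j, φ ξ, hij, hij', TE_map φ i j ξ⟩

theorem quadE_mulVec_of_mem_EOE {n : ℕ} {E : Matrix (Fin (2 * r)) (Fin (2 * r)) R}
    (hE : E ∈ EOE r n R) (v : Fin (2 * r) → R) : quadE r (E *ᵥ v) = quadE r v := by
  obtain ⟨L, -, hL, rfl⟩ := hE
  induction L with
  | nil => simp
  | cons g L ih =>
    rw [List.forall_mem_cons] at hL
    rw [List.prod_cons, ← mulVec_mulVec, hL.1.quadE_mulVec, ih hL.2]

theorem TransvectionPath.exists_mem_EOE {t : R} {n : ℕ} {p q : Fin r → R}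
    (h : TransvectionPath t n p q) {v : Fin (2 * r) → R} (hv : posCoords v = p) :
    ∃ E ∈ EOE r n R, posCoords (E *ᵥ v) = q ∧
      ∃ η : Fin r → R, negCoords (E *ᵥ v) = negCoords v + t • η := by
  induction h with
  | refl => exact ⟨1, one_mem_EOE, by simpa using hv, 0, by simp⟩
  | @step _ _ _ i j ξ hij _ ih =>
    obtain ⟨E, hE, hpos, η, hneg⟩ := ih hv
    set w := E *ᵥ v with hw
    refine ⟨TE r (posE r i) (posE r j) (t * ξ) * E, (isElemE_posE_posE hij _).mul_mem_EOE hE, ?_,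
      η - Pi.single j (ξ * negCoords w i), ?_⟩
    · simp [← mulVec_mulVec, TE_mulVec, ← hw, ← hpos, posCoords]
    · have hTE : negCoords (TE r (posE r i) (posE r j) (t * ξ) *ᵥ w)
          = negCoords w - Pi.single j (t * ξ * negCoords w i) := by
        simp [TE_mulVec, negCoords]
      rw [← mulVec_mulVec, ← hw, hTE, hneg, smul_sub, ← Pi.single_smul, smul_eq_mul, mul_assoc,
        add_sub_assoc]

theorem exists_mem_EOE_add_sum_mulVec {S : Finset (Fin r × Fin r)} (hS : ∀ x ∈ S, x.1 ≠ x.2)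
    (α : Fin r → Fin r → R) :
    ∃ E ∈ EOE r S.card R, ∀ v, posCoords (E *ᵥ v) = posCoords v ∧
      negCoords (E *ᵥ v) = negCoords v + (∑ x ∈ S, (Matrix.single x.1 x.2 (α x.1 x.2) -
        Matrix.single x.2 x.1 (α x.1 x.2))) *ᵥ posCoords v := by
  induction S using Finset.induction_on with
  | empty => exact ⟨1, one_mem_EOE, by simp⟩
  | insert a S ha ih =>
    obtain ⟨E, hE, hcoords⟩ := ih fun x hx => hS x (Finset.mem_insert_of_mem hx)
    obtain ⟨i, j⟩ := a
    have hij : i ≠ j := hS (i, j) (Finset.mem_insert_self _ _)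
    refine ⟨TE r (negE r (posE r i)) (posE r j) (α i j) * E, ?_, fun v => ?_⟩
    · rw [Finset.card_insert_of_notMem ha]
      exact (isElemE_negE_posE hij _).mul_mem_EOE hE
    · obtain ⟨hpos, hneg⟩ := hcoords v
      have hTE (w : Fin (2 * r) → R) : TE r (negE r (posE r i)) (posE r j) (α i j) *ᵥ w =
          w + Pi.single (negE r (posE r i)) (α i j * posCoords w j) -
            Pi.single (negE r (posE r j)) (α i j * posCoords w i) := by
        rw [TE_mulVec, negE_negE]
        rfl
      rw [← mulVec_mulVec, hTE, hpos, Finset.sum_insert ha, add_mulVec]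
      refine ⟨by simp [hpos], ?_⟩
      have hsingle (k l : Fin r) (c : R) (p : Fin r → R) :
          Matrix.single k l c *ᵥ p = Pi.single k (c * p l) := single_mulVec ..
      simp only [negCoords_add, negCoords_sub, negCoords_single_negE, hneg, sub_mulVec, hsingle]
      abel

theorem sum_single_sub_single_eq_sub_transpose {ι : Type*} [Fintype ι] [LinearOrder ι]
    (β : Matrix ι ι R) :
    ∑ x : ι × ι with x.1 < x.2, (Matrix.single x.1 x.2 (β x.1 x.2 - β x.2 x.1) -
      Matrix.single x.2 x.1 (β x.1 x.2 - β x.2 x.1)) = β - βᵀ := by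
  ext k l
  rw [Matrix.sum_apply]
  rcases lt_trichotomy k l with hkl | rfl | hlk
  · rw [Finset.sum_eq_single_of_mem (k, l) (by simpa using hkl)]
    · simp [hkl.ne']
    · rintro ⟨i, j⟩ hij hne
      have hij : i < j := by simpa using hij
      grind [Matrix.sub_apply]
  · rw [Finset.sum_eq_zero, Matrix.sub_apply, transpose_apply, sub_self]
    rintro ⟨i, j⟩ hij
    have hij : i < j := by simpa using hij
    grind [Matrix.sub_apply]
  · rw [Finset.sum_eq_single_of_mem (l, k) (by simpa using hlk)]
    · simp [hlk.ne]
    · rintro ⟨i, j⟩ hij hne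
      have hij : i < j := by simpa using hij
      grind [Matrix.sub_apply]

theorem card_fst_lt_snd (r : ℕ) :
    (Finset.univ.filter fun x : Fin r × Fin r => x.1 < x.2).card = r * (r - 1) / 2 := by
  calc (Finset.univ.filter fun x : Fin r × Fin r => x.1 < x.2).card
      = ∑ j : Fin r, (Finset.Iio j).card := by
        simp_rw [Finset.card_filter, Fintype.sum_prod_type_right, ← Finset.card_filter,
          Finset.filter_gt_eq_Iio]
    _ = r * (r - 1) / 2 := by
        simp_rw [Fin.card_Iio, Fin.sum_univ_eq_sum_range (fun j => j), Finset.sum_range_id]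

/- The alternating matrix `α = ε aᵗ - a εᵗ` satisfies `α v₊ = s ε`. -/
theorem exists_mem_EOE_mulVec_eq_of_posCoords_eq {s : R} {v w : Fin (2 * r) → R} {a ε : Fin r → R}
    (hpos : posCoords w = posCoords v) (hneg : negCoords v = negCoords w + s • ε)
    (ha : a ⬝ᵥ posCoords v = s) (hε : ε ⬝ᵥ posCoords v = 0) :
    ∃ E ∈ EOE r (r * (r - 1) / 2) R, E *ᵥ w = v := by
  set β := vecMulVec ε a with hβ
  obtain ⟨E, hE, hcoords⟩ := exists_mem_EOE_add_sum_mulVec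
    (S := Finset.univ.filter fun x : Fin r × Fin r => x.1 < x.2)
    (fun x hx => (Finset.mem_filter.1 hx).2.ne) (fun i j => β i j - β j i)
  rw [card_fst_lt_snd] at hE
  rw [sum_single_sub_single_eq_sub_transpose] at hcoords
  refine ⟨E, hE, ext_coords ((hcoords w).1.trans hpos) ?_⟩
  rw [(hcoords w).2, hpos, hneg, hβ, transpose_vecMulVec, sub_mulVec, vecMulVec_mulVec,
    vecMulVec_mulVec, ha, hε]
  simp

end Transvections

section Shift

variable {R S : Type*} [CommRing R] [CommRing S] {r : ℕ} {l g h : Fin r} {s t : R}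
  {u v d : Fin (2 * r) → R} {a a' : Fin r → R}

theorem exists_mem_EOE_posCoords_eq (hgl : g ≠ l) (hhl : h ≠ l) (hgh : g ≠ h)
    (ht : IsLeftRegular t) (hal : a l = 0) (ha'l : a' l = 0) (hau : a ⬝ᵥ posCoords u = s)
    (ha'v : a' ⬝ᵥ posCoords v = s) (hquad : quadE r u = quadE r v)
    (hv : v = u + (t ^ 2 * s ^ 2) • d) :
    ∃ E ∈ EOE r (7 * (r - 1) + 4) R, posCoords (E *ᵥ u) = posCoords v ∧
      ∃ ε, negCoords v = negCoords (E *ᵥ u) + t • ε ∧ ε ⬝ᵥ posCoords v = 0 := by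
  have hvpos : posCoords v = posCoords u + (t ^ 2 * s ^ 2) • posCoords d := congrArg posCoords hv
  have hvneg : negCoords v = negCoords u + (t ^ 2 * s ^ 2) • negCoords d := congrArg negCoords hv
  have path := TransvectionPath.of_eq_add_smul t hgl hhl hgh hal ha'l hau ha'v hvpos
  rw [Fintype.card_fin] at path
  obtain ⟨E, hE, hpos, η, hneg⟩ := path.exists_mem_EOE rfl
  have hε : negCoords v = negCoords (E *ᵥ u) + t • ((t * s ^ 2) • negCoords d - η) := by
    rw [hvneg, hneg]
    module
  refine ⟨E, hE, hpos, _, hε, ht.mul_left_eq_zero_iff.1 ?_⟩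
  calc t * (((t * s ^ 2) • negCoords d - η) ⬝ᵥ posCoords v)
      = quadE r v - quadE r (E *ᵥ u) := by
        rw [quadE_eq_dotProduct_s18, quadE_eq_dotProduct_s18, hpos, hε, ← dotProduct_sub,
          add_sub_cancel_left, dotProduct_smul, dotProduct_comm, smul_eq_mul]
    _ = 0 := by rw [quadE_mulVec_of_mem_EOE hE, hquad, sub_self]

theorem exists_mem_EOE_mulVec_map_eq (φ : R →+* S) (hφ : φ t = φ s) (hgl : g ≠ l) (hhl : h ≠ l)
    (hgh : g ≠ h) (ht : IsLeftRegular t) (hal : a l = 0) (ha'l : a' l = 0)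
    (hau : a ⬝ᵥ posCoords u = s) (ha'v : a' ⬝ᵥ posCoords v = s) (hquad : quadE r u = quadE r v)
    (hv : v = u + (t ^ 2 * s ^ 2) • d) :
    ∃ E ∈ EOE r (r * (r - 1) / 2 + (7 * (r - 1) + 4)) S, E *ᵥ (φ ∘ u) = φ ∘ v := by
  obtain ⟨E, hE, hpos, ε, hneg, hε⟩ :=
    exists_mem_EOE_posCoords_eq hgl hhl hgh ht hal ha'l hau ha'v hquad hv
  obtain ⟨F, hF, hFv⟩ := exists_mem_EOE_mulVec_eq_of_posCoords_eq (s := φ s) (v := φ ∘ v)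
    (w := φ ∘ (E *ᵥ u)) (a := φ ∘ a') (ε := φ ∘ ε)
    (congrArg (φ ∘ ·) hpos)
    (by
      rw [← hφ]
      exact (congrArg (φ ∘ ·) hneg).trans <| funext fun i => by simp [negCoords])
    (by rw [← ha'v, φ.map_dotProduct]; rfl)
    (by rw [← φ.map_zero, ← hε, φ.map_dotProduct]; rfl)
  have hEu : E.map φ *ᵥ (φ ∘ u) = φ ∘ (E *ᵥ u) := funext fun i => (φ.map_mulVec E u i).symm
  exact ⟨F * E.map φ, mul_mem_EOE hF (map_mem_EOE φ hE), by rw [← mulVec_mulVec, hEu, hFv]⟩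

end Shift

section PolynomialShift

open Polynomial

variable {B S : Type*} [CommRing B] [CommRing S] [Algebra B S] {r : ℕ}

theorem exists_aeval_add_mul_eq {ι : Type*} (b : ι → B[X]) (x y z : S) :
    ∃ d : ι → S, aeval (x + y * z) ∘ b = aeval x ∘ b + y • d := by
  have hdvd (i : ι) : y ∣ aeval (x + y * z) (b i) - aeval x (b i) := by
    have := sub_dvd_eval_sub (x + y * z) x ((b i).map (algebraMap B S))
    rw [add_sub_cancel_left, eval_map_algebraMap, eval_map_algebraMap] at this
    exact (dvd_mul_right y z).trans this
  choose d hd using hdvd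
  exact ⟨d, funext fun i => sub_eq_iff_eq_add'.1 (hd i)⟩

theorem exists_mem_EOE_mulVec_aeval_eq {l g h : Fin r} (hgl : g ≠ l) (hhl : h ≠ l) (hgh : g ≠ h)
    {b : Fin (2 * r) → B[X]} {c s : B} (hb : quadE r b = C c) {a : Fin r → B[X]} (hal : a l = 0)
    (hab : a ⬝ᵥ posCoords b = C s) (x z : S) :
    ∃ E ∈ EOE r (r * (r - 1) / 2 + (7 * (r - 1) + 4)) S,
      E *ᵥ (aeval x ∘ b) = aeval (x + algebraMap B S (s ^ 4) * z) ∘ b := by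
  set σ := algebraMap B S[X] s with hσ
  set x₁ : S[X] := C x
  set x₂ : S[X] := x₁ + X ^ 2 * σ ^ 2 * C z with hx₂
  have hquad (y : S[X]) : quadE r (aeval y ∘ b) = algebraMap B S[X] c := by
    simpa [hb] using quadE_map (aeval y : B[X] →ₐ[B] S[X]).toRingHom b
  have hdot (y : S[X]) : (aeval y ∘ a) ⬝ᵥ posCoords (aeval y ∘ b) = σ := by
    rw [hσ, ← aeval_C y s, ← hab]
    exact ((aeval y : B[X] →ₐ[B] S[X]).toRingHom.map_dotProduct _ _).symm
  obtain ⟨d, hd⟩ := exists_aeval_add_mul_eq b x₁ (X ^ 2 * σ ^ 2) (C z)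
  let φ : S[X] →ₐ[B] S := (aeval (algebraMap B S s) : S[X] →ₐ[S] S).restrictScalars B
  have hφσ : φ σ = algebraMap B S s := φ.commutes s
  have hφX : φ X = φ σ := by rw [hφσ]; exact aeval_X _
  have hφx₁ : φ x₁ = x := aeval_C _ _
  have hφx₂ : φ x₂ = x + algebraMap B S (s ^ 4) * z := by
    have hφz : φ (C z) = z := aeval_C _ _
    rw [hx₂, map_add, map_mul, map_mul, map_pow, map_pow, hφX, hφσ, hφx₁, hφz, map_pow]
    ring
  have hφ (y : S[X]) : φ ∘ aeval y ∘ b = aeval (φ y) ∘ b :=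
    funext fun i => (aeval_algHom_apply φ y (b i)).symm
  have := exists_mem_EOE_mulVec_map_eq φ.toRingHom hφX hgl hhl hgh isRegular_X.left
    (a := aeval x₁ ∘ a) (a' := aeval x₂ ∘ a) (by simp [hal]) (by simp [hal]) (hdot x₁) (hdot x₂)
    ((hquad x₁).trans (hquad x₂).symm) hd
  rwa [← hφx₂, ← hφ, ← hφx₁, ← hφ]

theorem even_shift_variable_general (hr : 3 ≤ r) {b : Fin (2 * r) → B[X]} {c s : B}
    (hb : quadE r b = C c)
    (hs : C s ∈ Ideal.span {x : B[X] | ∃ i : Fin (2 * r), i.val < r - 1 ∧ x = b i}) :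
    ∃ E ∈ EOE r (r * (r - 1) / 2 + 8 * r - 4) B[X][X],
      E *ᵥ (fun i => C (b i)) = fun i => aeval (R := B) (C X + C (C (s ^ 4)) * X) (b i) := by
  let l : Fin r := ⟨r - 1, by omega⟩
  let g : Fin r := ⟨0, by omega⟩
  let h : Fin r := ⟨1, by omega⟩
  have hgl : g ≠ l := by simp only [g, l, ne_eq, Fin.ext_iff]; omega
  have hhl : h ≠ l := by simp only [h, l, ne_eq, Fin.ext_iff]; omega
  have hgh : g ≠ h := by simp [g, h, Fin.ext_iff]
  obtain ⟨a, hal, hab⟩ := exists_dotProduct_posCoords_eq_of_mem_span (l := l) hs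
  obtain ⟨E, hE, hEb⟩ :=
    exists_mem_EOE_mulVec_aeval_eq hgl hhl hgh hb hal hab (C X : B[X][X]) X
  have hC (p : B[X]) : aeval (C X : B[X][X]) p = C p := by
    simpa using aeval_algebraMap_apply B[X][X] (X : B[X]) p
  refine ⟨E, EOE_mono (by omega) hE, ?_⟩
  simpa [Function.comp_def, hC] using hEb

end PolynomialShift

/-- Shifting the variable: for `b = b(y) ∈ IUm_{2r}(B[y])` and
`s ∈ B ∩ ⟨b_1,…,b_{r−1}⟩`, there is `m ∈ ℕ` such that, in `B[y][z]`,
the column `b(y + sᵐz)` lies in `EO(2r, B[y][z])^{≤ r(r−1)/2 + 8r−4} · b(y)`.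
Here the outer polynomial variable is `z`, and `y ↦ y + sᵐz` is the `B`-algebra
map `B[y] → B[y][z]` sending `y` to `C y + C (C sᵐ) * z`. -/
theorem even_shift_variable
    (B : Type*) [CommRing B] [IsNoetherianRing B] (r : ℕ) (hr : 3 ≤ r)
    (b : Fin (2 * r) → Polynomial B) (hb : b ∈ IUmE r (Polynomial B))
    (s : B)
    (hs : Polynomial.C s ∈ Ideal.span {x : Polynomial B | ∃ i : Fin (2 * r), i.val < r - 1 ∧ x = b i}) :
    ∃ m : ℕ, ∃ E ∈ EOE r (r * (r - 1) / 2 + 8 * r - 4) (Polynomial (Polynomial B)),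
      E.mulVec (fun i => Polynomial.C (b i)) = fun i =>
        Polynomial.aeval (R := B)
          (Polynomial.C Polynomial.X + Polynomial.C (Polynomial.C (s ^ m)) * Polynomial.X)
          (b i) := by
  exact ⟨4, even_shift_variable_general hr (hb.2.trans Polynomial.C_0.symm) hs⟩
end
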